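/- Every language recognized by an L*◇ grammar is context-free (including possibly the empty string). -/

import Mathlib

/-- Types of the bracketed Lambek calculus. -/
inductive PTy where
  | prim : ℕ → PTy
  | ldiv : PTy → PTy → PTy   -- ldiv A B = A \ B
  | rdiv : PTy → PTy → PTy   -- rdiv B A = B / A
  | mul  : PTy → PTy → PTy
  | dia  : PTy → PTy
  | box  : PTy → PTy
deriving DecidableEq

/-- Type trees: leaves labeled by types, internal nodes are brackets. -/
inductive PTree where
  | leaf : PTy → PTree
  | node : List PTree → PTree

abbrev PHedge := List PTree

/-- Contexts: a hedge with one distinguished hole. -/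
inductive PCtx where
  | hole : PHedge → PHedge → PCtx
  | brk  : PCtx → PHedge → PHedge → PCtx

/-- Substitution of a hedge for the hole of a context. -/
def PCtx.plug : PCtx → PHedge → PHedge
  | .hole pre post, D => pre ++ D ++ post
  | .brk c pre post, D => pre ++ (PTree.node (c.plug D) :: post)

/-- All primitive types occurring in the type belong to `B`. -/
def PTy.over (B : Finset ℕ) : PTy → Prop
  | .prim p => p ∈ B
  | .ldiv A C => A.over B ∧ C.over B
  | .rdiv C A => C.over B ∧ A.over B
  | .mul A C => A.over B ∧ C.over B
  | .dia A => A.over B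
  | .box A => A.over B

/-- Length of a type. -/
def lenP : PTy → ℕ
  | .prim _ => 1
  | .ldiv A B => lenP A + lenP B
  | .rdiv B A => lenP B + lenP A
  | .mul A B => lenP A + lenP B
  | .dia A => lenP A + 2
  | .box A => lenP A + 2

mutual
/-- The yield of a tree: the sequence of types labeling its leaves. -/
def yieldTree : PTree → List PTy
  | .leaf A => [A]
  | .node ts => yieldHedge ts
/-- The yield of a hedge. -/
def yieldHedge : List PTree → List PTy
  | [] => []
  | t :: ts => yieldTree t ++ yieldHedge ts
end
/-- L*◇ : the Lambek calculus with brackets, empty antecedents allowed. -/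
inductive PProvS : PHedge → PTy → Prop where
  | id (p) : PProvS [.leaf (.prim p)] (.prim p)
  | ldivL (G : PHedge) (D : PCtx) (A B C) :
      PProvS G A → PProvS (D.plug [.leaf B]) C →
      PProvS (D.plug (G ++ [.leaf (.ldiv A B)])) C
  | ldivR (Pi : PHedge) (A B) :
      PProvS (.leaf A :: Pi) B → PProvS Pi (.ldiv A B)
  | rdivL (G : PHedge) (D : PCtx) (A B C) :
      PProvS G A → PProvS (D.plug [.leaf B]) C →
      PProvS (D.plug (.leaf (.rdiv B A) :: G)) C
  | rdivR (Pi : PHedge) (A B) :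
      PProvS (Pi ++ [.leaf A]) B → PProvS Pi (.rdiv B A)
  | mulL (G : PCtx) (A B C) :
      PProvS (G.plug [.leaf A, .leaf B]) C → PProvS (G.plug [.leaf (.mul A B)]) C
  | mulR (G D : PHedge) (A B) :
      PProvS G A → PProvS D B → PProvS (G ++ D) (.mul A B)
  | diaL (G : PCtx) (A B) :
      PProvS (G.plug [.node [.leaf A]]) B → PProvS (G.plug [.leaf (.dia A)]) B
  | diaR (G : PHedge) (A) :
      PProvS G A → PProvS [.node G] (.dia A)
  | boxL (G : PCtx) (A B) :
      PProvS (G.plug [.leaf A]) B → PProvS (G.plug [.node [.leaf (.box A)]]) B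
  | boxR (G : PHedge) (A) :
      PProvS [.node G] A → PProvS G (.box A)
  | cut (G : PHedge) (D : PCtx) (A B) :
      PProvS G A → PProvS (D.plug [.leaf A]) B → PProvS (D.plug G) B

/-- The language generated by the L*◇ grammar `(Σ, I, Dt)`. -/
def grammarLangStar {Sig : Type} (I : Finset (Sig × PTy)) (Dt : PTy) : Language Sig :=
  {w | ∃ (G : PHedge) (l : List (Sig × PTy)),
        PProvS G Dt ∧ (∀ x ∈ l, x ∈ I) ∧
        w = l.map Prod.fst ∧ yieldHedge G = l.map Prod.snd}


set_option linter.all false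

namespace LB

/-! ### Cut-free calculus -/

/-- The cut-free bracketed calculus. -/
inductive HP : PHedge → PTy → Prop where
  | id (p) : HP [.leaf (.prim p)] (.prim p)
  | ldivL (G : PHedge) (D : PCtx) (A B C) :
      HP G A → HP (D.plug [.leaf B]) C →
      HP (D.plug (G ++ [.leaf (.ldiv A B)])) C
  | ldivR (Pi : PHedge) (A B) :
      HP (.leaf A :: Pi) B → HP Pi (.ldiv A B)
  | rdivL (G : PHedge) (D : PCtx) (A B C) :
      HP G A → HP (D.plug [.leaf B]) C →
      HP (D.plug (.leaf (.rdiv B A) :: G)) C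
  | rdivR (Pi : PHedge) (A B) :
      HP (Pi ++ [.leaf A]) B → HP Pi (.rdiv B A)
  | mulL (G : PCtx) (A B C) :
      HP (G.plug [.leaf A, .leaf B]) C → HP (G.plug [.leaf (.mul A B)]) C
  | mulR (G D : PHedge) (A B) :
      HP G A → HP D B → HP (G ++ D) (.mul A B)
  | diaL (G : PCtx) (A B) :
      HP (G.plug [.node [.leaf A]]) B → HP (G.plug [.leaf (.dia A)]) B
  | diaR (G : PHedge) (A) :
      HP G A → HP [.node G] (.dia A)
  | boxL (G : PCtx) (A B) :
      HP (G.plug [.leaf A]) B → HP (G.plug [.node [.leaf (.box A)]]) B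
  | boxR (G : PHedge) (A) :
      HP [.node G] A → HP G (.box A)

/-- Refine a context by adding siblings around the hole. -/
def inner : PCtx → PHedge → PHedge → PCtx
  | .hole p q, a, b => .hole (p ++ a) (b ++ q)
  | .brk c p q, a, b => .brk (inner c a b) p q

theorem plug_inner (D : PCtx) (a b x : PHedge) :
    (inner D a b).plug x = D.plug (a ++ x ++ b) := by
  induction D with
  | hole p q => simp [inner, PCtx.plug]
  | brk c p q ih => simp [inner, PCtx.plug, ih]

/-- Refine a context by adding a bracket around the hole. -/
def innerNode : PCtx → PCtx
  | .hole p q => .brk (.hole [] []) p q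
  | .brk c p q => .brk (innerNode c) p q

theorem plug_innerNode (D : PCtx) (x : PHedge) :
    (innerNode D).plug x = D.plug [.node x] := by
  induction D with
  | hole p q => simp [innerNode, PCtx.plug]
  | brk c p q ih => simp [innerNode, PCtx.plug, ih]

/-- Closure operator. -/
def Cl (X : PHedge → Prop) (w : PHedge) : Prop :=
  ∀ (D : PCtx) (C : PTy), (∀ x, X x → HP (D.plug x) C) → HP (D.plug w) C

/-- Semantic values. -/
def Sem : PTy → PHedge → Prop
  | .prim p => fun w => HP w (.prim p)
  | .ldiv A B => fun w => ∀ a, Sem A a → Sem B (a ++ w)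
  | .rdiv B A => fun w => ∀ a, Sem A a → Sem B (w ++ a)
  | .mul A B => Cl (fun w => ∃ a b, w = a ++ b ∧ Sem A a ∧ Sem B b)
  | .dia A => Cl (fun w => ∃ a, w = [PTree.node a] ∧ Sem A a)
  | .box A => fun w => Sem A [.node w]

theorem Cl_idem {X w} (h : Cl (Cl X) w) : Cl X w := by
  intro D C hx
  exact h D C (fun x hx' => hx' D C hx)

theorem sem_closed (A : PTy) : ∀ w, Cl (Sem A) w → Sem A w := by
  induction A with
  | prim p =>
    intro w h
    have := h (.hole [] []) (.prim p) (fun x hx => by simpa [PCtx.plug, Sem] using hx)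
    simpa [PCtx.plug, Sem] using this
  | ldiv A B _ ihB =>
    intro w h a ha
    apply ihB
    intro D C hx
    have := h (inner D a []) C (fun x hx' => by
      rw [plug_inner]; simpa using hx _ (hx' a ha))
    simpa [plug_inner] using this
  | rdiv B A ihB _ =>
    intro w h a ha
    apply ihB
    intro D C hx
    have := h (inner D [] a) C (fun x hx' => by
      rw [plug_inner]; simpa using hx _ (hx' a ha))
    simpa [plug_inner] using this
  | mul A B _ _ => intro w h; exact Cl_idem h
  | dia A _ => intro w h; exact Cl_idem h
  | box A ih =>
    intro w h
    apply ih
    intro D C hx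
    have := h (innerNode D) C (fun x hx' => by
      rw [plug_innerNode]; exact hx _ hx')
    simpa [plug_innerNode] using this

theorem plug_hole_nil (x : PHedge) : (PCtx.hole [] []).plug x = x := by simp [PCtx.plug]

theorem okada (A : PTy) : Sem A [.leaf A] ∧ ∀ w, Sem A w → HP w A := by
  induction A with
  | prim p => exact ⟨HP.id p, fun w h => h⟩
  | ldiv A B ihA ihB =>
    refine ⟨?_, ?_⟩
    · intro a ha
      apply sem_closed
      intro D C hx
      exact HP.ldivL _ _ _ _ _ (ihA.2 a ha) (hx _ ihB.1)
    · intro w h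
      exact HP.ldivR _ _ _ (ihB.2 _ (h _ ihA.1))
  | rdiv B A ihB ihA =>
    refine ⟨?_, ?_⟩
    · intro a ha
      apply sem_closed
      intro D C hx
      exact HP.rdivL _ _ _ _ _ (ihA.2 a ha) (hx _ ihB.1)
    · intro w h
      exact HP.rdivR _ _ _ (ihB.2 _ (h _ ihA.1))
  | mul A B ihA ihB =>
    refine ⟨?_, ?_⟩
    · intro D C hx
      exact HP.mulL _ _ _ _ (hx _ ⟨_, _, rfl, ihA.1, ihB.1⟩)
    · intro w h
      have := h (.hole [] []) (.mul A B) (by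
        rintro x ⟨a, b, rfl, ha, hb⟩
        rw [plug_hole_nil]
        exact HP.mulR _ _ _ _ (ihA.2 a ha) (ihB.2 b hb))
      rwa [plug_hole_nil] at this
  | dia A ih =>
    refine ⟨?_, ?_⟩
    · intro D C hx
      exact HP.diaL _ _ _ (hx _ ⟨_, rfl, ih.1⟩)
    · intro w h
      have := h (.hole [] []) (.dia A) (by
        rintro x ⟨a, rfl, ha⟩
        rw [plug_hole_nil]
        exact HP.diaR _ _ (ih.2 a ha))
      rwa [plug_hole_nil] at this
  | box A ih =>
    refine ⟨?_, ?_⟩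
    · show Sem A [.node [.leaf (.box A)]]
      apply sem_closed
      intro D C hx
      exact HP.boxL _ _ _ (hx _ ih.1)
    · intro w h
      exact HP.boxR _ _ (ih.2 _ h)

mutual
/-- Interpretation of trees. -/
def IntT : PTree → PHedge → Prop
  | .leaf A, w => Sem A w
  | .node ts, w => ∃ v, IntH ts v ∧ w = [.node v]
/-- Interpretation of hedges. -/
def IntH : List PTree → PHedge → Prop
  | [], w => w = []
  | t :: ts, w => ∃ a b, w = a ++ b ∧ IntT t a ∧ IntH ts b
end

theorem intH_append (X Y : PHedge) (w : PHedge) :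
    IntH (X ++ Y) w ↔ ∃ a b, w = a ++ b ∧ IntH X a ∧ IntH Y b := by
  induction X generalizing w with
  | nil => simp [IntH]
  | cons t ts ih =>
    simp only [List.cons_append, IntH, ih]
    constructor
    · rintro ⟨a, b, rfl, ha, c, d, rfl, hc, hd⟩
      exact ⟨a ++ c, d, by simp, ⟨a, c, rfl, ha, hc⟩, hd⟩
    · rintro ⟨_, d, rfl, ⟨a, c, rfl, ha, hc⟩, hd⟩
      exact ⟨a, c ++ d, by simp, ha, c, d, rfl, hc, hd⟩

theorem intH_leaf (A : PTy) (w) : IntH [.leaf A] w ↔ Sem A w := by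
  simp [IntH, IntT]

theorem intH_node (X : PHedge) (w) : IntH [.node X] w ↔ ∃ v, IntH X v ∧ w = [.node v] := by
  simp [IntH, IntT]

theorem intH_plug (D : PCtx) (X : PHedge) (w : PHedge) (h : IntH (D.plug X) w) :
    ∃ (D' : PCtx) (x : PHedge), w = D'.plug x ∧ IntH X x ∧
      ∀ Y y, IntH Y y → IntH (D.plug Y) (D'.plug y) := by
  induction D generalizing w with
  | hole p q =>
    simp only [PCtx.plug, intH_append] at h
    obtain ⟨_, c, rfl, ⟨a, b, rfl, ha, hb⟩, hc⟩ := h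
    refine ⟨.hole a c, b, by simp [PCtx.plug], hb, ?_⟩
    intro Y y hy
    simp only [PCtx.plug, intH_append]
    exact ⟨_, c, rfl, ⟨a, y, rfl, ha, hy⟩, hc⟩
  | brk c p q ih =>
    simp only [PCtx.plug, intH_append, IntH, IntT] at h
    obtain ⟨a, _, rfl, ha, _, b, rfl, ⟨v, hv, rfl⟩, hb⟩ := h
    obtain ⟨D', x, rfl, hx, hD⟩ := ih v hv
    refine ⟨.brk D' a b, x, by simp [PCtx.plug], hx, ?_⟩
    intro Y y hy
    simp only [PCtx.plug, intH_append, IntH, IntT]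
    exact ⟨a, _, rfl, ha, _, b, rfl, ⟨_, hD Y y hy, rfl⟩, hb⟩

/-- Compose contexts. -/
def comp : PCtx → PCtx → PCtx
  | .hole p q, .hole a b => .hole (p ++ a) (b ++ q)
  | .hole p q, .brk c a b => .brk c (p ++ a) (b ++ q)
  | .brk c p q, E => .brk (comp c E) p q

theorem plug_comp (D E : PCtx) (x : PHedge) : (comp D E).plug x = D.plug (E.plug x) := by
  induction D with
  | hole p q => cases E <;> simp [comp, PCtx.plug]
  | brk c p q ih => simp [comp, PCtx.plug, ih]

theorem sem_cl {X : PHedge → Prop} {C : PTy} {x : PHedge} (D : PCtx) (hx : Cl X x)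
    (h : ∀ y, X y → Sem C (D.plug y)) : Sem C (D.plug x) := by
  apply sem_closed
  intro E F hE
  have := hx (comp E D) F (fun y hy => by rw [plug_comp]; exact hE _ (h y hy))
  rwa [plug_comp] at this

theorem sound {G C} (h : PProvS G C) : ∀ w, IntH G w → Sem C w := by
  induction h with
  | id p => intro w hw; rwa [intH_leaf] at hw
  | ldivL G D A B C _ _ ih1 ih2 =>
    intro w hw
    obtain ⟨D', x, rfl, hx, hD⟩ := intH_plug _ _ _ hw
    rw [intH_append] at hx
    obtain ⟨a, b, rfl, ha, hb⟩ := hx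
    rw [intH_leaf] at hb
    exact ih2 _ (hD _ _ ((intH_leaf _ _).2 (hb a (ih1 a ha))))
  | rdivL G D A B C _ _ ih1 ih2 =>
    intro w hw
    obtain ⟨D', x, rfl, hx, hD⟩ := intH_plug _ _ _ hw
    obtain ⟨b, a, rfl, hb, ha⟩ := hx
    exact ih2 _ (hD _ _ ((intH_leaf _ _).2 (hb a (ih1 a ha))))
  | ldivR Pi A B _ ih =>
    intro w hw a ha
    exact ih _ ⟨a, w, rfl, ha, hw⟩
  | rdivR Pi A B _ ih =>
    intro w hw a ha
    exact ih _ ((intH_append _ _ _).2 ⟨w, a, rfl, hw, (intH_leaf _ _).2 ha⟩)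
  | mulL D A B C _ ih =>
    intro w hw
    obtain ⟨D', x, rfl, hx, hD⟩ := intH_plug _ _ _ hw
    rw [intH_leaf] at hx
    apply sem_cl D' hx
    rintro _ ⟨a, b, rfl, ha, hb⟩
    exact ih _ (hD _ _ ⟨a, b, rfl, ha, (intH_leaf _ _).2 hb⟩)
  | mulR G D A B _ _ ih1 ih2 =>
    intro w hw
    rw [intH_append] at hw
    obtain ⟨a, b, rfl, ha, hb⟩ := hw
    intro E C hE
    exact hE _ ⟨a, b, rfl, ih1 _ ha, ih2 _ hb⟩
  | diaL D A B _ ih =>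
    intro w hw
    obtain ⟨D', x, rfl, hx, hD⟩ := intH_plug _ _ _ hw
    rw [intH_leaf] at hx
    apply sem_cl D' hx
    rintro _ ⟨a, rfl, ha⟩
    exact ih _ (hD _ _ ((intH_node _ _).2 ⟨a, (intH_leaf _ _).2 ha, rfl⟩))
  | diaR G A _ ih =>
    intro w hw
    obtain ⟨v, hv, rfl⟩ := (intH_node _ _).1 hw
    intro E C hE
    exact hE _ ⟨v, rfl, ih _ hv⟩
  | boxL D A B _ ih =>
    intro w hw
    obtain ⟨D', x, rfl, hx, hD⟩ := intH_plug _ _ _ hw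
    obtain ⟨v, hv, rfl⟩ := (intH_node _ _).1 hx
    rw [intH_leaf] at hv
    exact ih _ (hD _ _ ((intH_leaf _ _).2 hv))
  | boxR G A _ ih =>
    intro w hw
    exact ih _ ((intH_node _ _).2 ⟨w, hw, rfl⟩)
  | cut G D A B _ _ ih1 ih2 =>
    intro w hw
    obtain ⟨D', x, rfl, hx, hD⟩ := intH_plug _ _ _ hw
    exact ih2 _ (hD _ _ ((intH_leaf _ _).2 (ih1 _ hx)))

mutual
theorem intT_self : (t : PTree) → IntT t [t]
  | .leaf A => by simpa [IntT] using (okada A).1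
  | .node ts => by simpa [IntT] using intH_self ts
theorem intH_self : (ts : List PTree) → IntH ts ts
  | [] => by simp [IntH]
  | t :: ts => by
    rw [IntH]
    exact ⟨[t], ts, rfl, intT_self t, intH_self ts⟩
end

/-- Cut elimination. -/
theorem cut_elim {G C} (h : PProvS G C) : HP G C :=
  (okada C).2 _ (sound h _ (intH_self G))

theorem prov_id (A : PTy) : PProvS [.leaf A] A := by
  have toP : ∀ {G C}, HP G C → PProvS G C := by
    intro G C h
    induction h with
    | id p => exact .id p
    | ldivL _ _ _ _ _ _ _ h1 h2 => exact .ldivL _ _ _ _ _ h1 h2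
    | rdivL _ _ _ _ _ _ _ h1 h2 => exact .rdivL _ _ _ _ _ h1 h2
    | ldivR _ _ _ _ h1 => exact .ldivR _ _ _ h1
    | rdivR _ _ _ _ h1 => exact .rdivR _ _ _ h1
    | mulL _ _ _ _ _ h1 => exact .mulL _ _ _ _ h1
    | mulR _ _ _ _ _ _ h1 h2 => exact .mulR _ _ _ _ h1 h2
    | diaL _ _ _ _ h1 => exact .diaL _ _ _ h1
    | diaR _ _ _ h1 => exact .diaR _ _ h1
    | boxL _ _ _ _ h1 => exact .boxL _ _ _ h1
    | boxR _ _ _ h1 => exact .boxR _ _ h1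
  exact toP ((okada A).2 _ (okada A).1)


/-! ### Token lists -/

/-- Tokens: types and brackets. -/
inductive Tok where
  | ty : PTy → Tok
  | lb : Tok
  | rb : Tok

open Tok

mutual
/-- Flatten a tree to tokens. -/
def flatT : PTree → List Tok
  | .leaf A => [ty A]
  | .node ts => lb :: (flatH ts ++ [rb])
/-- Flatten a hedge to tokens. -/
def flatH : List PTree → List Tok
  | [] => []
  | t :: ts => flatT t ++ flatH ts
end

theorem flatH_append (X Y : PHedge) : flatH (X ++ Y) = flatH X ++ flatH Y := by
  induction X with
  | nil => simp [flatH]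
  | cons t ts ih => simp [flatH, ih]

/-- Tokens before the hole. -/
def cpre : PCtx → List Tok
  | .hole p _ => flatH p
  | .brk c p _ => flatH p ++ lb :: cpre c
/-- Tokens after the hole. -/
def cpost : PCtx → List Tok
  | .hole _ q => flatH q
  | .brk c _ q => cpost c ++ rb :: flatH q

theorem flat_plug (D : PCtx) (X : PHedge) :
    flatH (D.plug X) = cpre D ++ (flatH X ++ cpost D) := by
  induction D with
  | hole p q => simp [PCtx.plug, cpre, cpost, flatH_append]
  | brk c p q ih => simp [PCtx.plug, cpre, cpost, flatH_append, flatH, flatT, ih]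

/-- Token height. -/
def th : Tok → ℤ
  | ty _ => 0
  | lb => 1
  | rb => -1

/-- Total height. -/
def H (w : List Tok) : ℤ := (w.map th).sum

@[simp] theorem H_nil : H [] = 0 := rfl
@[simp] theorem H_cons (t w) : H (t :: w) = th t + H w := by simp [H]
@[simp] theorem H_append (u v) : H (u ++ v) = H u + H v := by simp [H]
@[simp] theorem th_ty (A) : th (ty A) = 0 := rfl
@[simp] theorem th_lb : th lb = 1 := rfl
@[simp] theorem th_rb : th rb = -1 := rfl

/-- Balanced token lists. -/
def Bal (w : List Tok) : Prop := H w = 0 ∧ ∀ u v, w = u ++ v → 0 ≤ H u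

theorem Bal.nil : Bal [] := by
  refine ⟨rfl, ?_⟩
  intro u v h
  have : u = [] := by
    cases u with
    | nil => rfl
    | cons a b => simp at h
  simp [this]

theorem Bal.append {u v} (hu : Bal u) (hv : Bal v) : Bal (u ++ v) := by
  refine ⟨by simp [hu.1, hv.1], ?_⟩
  intro a b h
  rcases List.append_eq_append_iff.1 h with ⟨c, rfl, h2⟩ | ⟨c, h1, rfl⟩
  · have := hv.2 _ _ h2
    simp [hu.1, this]
  · exact hu.2 _ _ h1

theorem Bal.node {w} (hw : Bal w) : Bal (lb :: (w ++ [rb])) := by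
  refine ⟨by simp [hw.1], ?_⟩
  intro u v h
  cases u with
  | nil => simp
  | cons a b =>
    simp only [List.cons_append, List.cons.injEq] at h
    obtain ⟨rfl, h⟩ := h
    rcases List.append_eq_append_iff.1 h with ⟨c, rfl, h2⟩ | ⟨c, h1, rfl⟩
    · cases c with
      | nil => simp [hw.1]
      | cons x y =>
        simp only [List.cons_append, List.cons.injEq] at h2
        obtain ⟨rfl, h2⟩ := h2
        have : y = [] := by
          cases y with
          | nil => rfl
          | cons a b => simp at h2
        simp [hw.1, this]
    · have := hw.2 _ _ h1
      simp; omega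

theorem Bal.ty (A) : Bal [ty A] := by
  refine ⟨by simp, ?_⟩
  intro u v h
  cases u with
  | nil => simp
  | cons a b =>
    simp only [List.cons_append, List.cons.injEq] at h
    obtain ⟨rfl, h⟩ := h
    have : b = [] := by
      cases b with
      | nil => rfl
      | cons a b => simp at h
    simp [this]

theorem Bal.mid {u v x} (h1 : Bal (u ++ v)) (h2 : Bal (v ++ x)) : Bal v := by
  have a := h1.1
  have b := h1.2 u v rfl
  have c := h2.2 v x rfl
  refine ⟨by simp at a; omega, ?_⟩
  intro p q h
  exact h2.2 p (q ++ x) (by simp [h])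

theorem Bal.subst {P X Q} (Y : List Tok) (h : Bal (P ++ (X ++ Q))) (hX : Bal X) (hY : Bal Y) :
    Bal (P ++ (Y ++ Q)) := by
  have h0 := h.1
  refine ⟨by simp [hX.1] at h0; simp [hY.1, h0], ?_⟩
  intro a b hab
  rcases List.append_eq_append_iff.1 hab with ⟨c, rfl, h2⟩ | ⟨c, h1, rfl⟩
  · have hP := h.2 P (X ++ Q) rfl
    rcases List.append_eq_append_iff.1 h2 with ⟨e, rfl, h3⟩ | ⟨e, h3, rfl⟩
    · have := h.2 (P ++ X ++ e) b (by simp [h3])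
      simp [hX.1] at this
      simp [hY.1, this]
    · have := hY.2 _ _ h3
      simp; omega
  · exact h.2 a (c ++ (X ++ Q)) (by simp [h1])

theorem Bal.right {u v} (h : Bal (u ++ v)) (hu : Bal u) : Bal v := by
  have := Bal.subst (P := []) (X := u) (Q := v) [] (by simpa using h) hu Bal.nil
  simpa using this

theorem Bal.left {u v} (h : Bal (u ++ v)) (hv : Bal v) : Bal u := by
  have := Bal.subst (P := u) (X := v) (Q := []) [] (by simpa using h) hv Bal.nil
  simpa using this

mutual
theorem flatT_bal : (t : PTree) → Bal (flatT t)
  | .leaf A => by rw [flatT]; exact Bal.ty A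
  | .node ts => by rw [flatT]; exact (flatH_bal ts).node
theorem flatH_bal : (ts : List PTree) → Bal (flatH ts)
  | [] => by rw [flatH]; exact Bal.nil
  | t :: ts => by rw [flatH]; exact (flatT_bal t).append (flatH_bal ts)
end

mutual
theorem invT (A : PTy) : (t : PTree) → (pre post : List Tok) → flatT t = pre ++ ty A :: post →
    ∃ D : PCtx, [t] = D.plug [.leaf A] ∧ cpre D = pre ∧ cpost D = post
  | .leaf B, pre, post, h => by
    rw [flatT] at h
    cases pre with
    | nil =>
      simp only [List.nil_append, List.cons.injEq, Tok.ty.injEq] at h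
      obtain ⟨rfl, rfl⟩ := h
      exact ⟨.hole [] [], by simp [PCtx.plug], by simp [cpre, flatH], by simp [cpost, flatH]⟩
    | cons a b => simp at h
  | .node ts, pre, post, h => by
    rw [flatT] at h
    cases pre with
    | nil => simp at h
    | cons a b =>
      simp only [List.cons_append, List.cons.injEq] at h
      obtain ⟨rfl, h⟩ := h
      rcases List.append_eq_append_iff.1 h with ⟨c, rfl, h2⟩ | ⟨c, h1, h2⟩
      · cases c with
        | nil => simp at h2
        | cons a b => simp at h2
      · cases c with
        | nil => simp at h2
        | cons x y =>
          simp only [List.cons_append, List.cons.injEq] at h2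
          obtain ⟨rfl, rfl⟩ := h2
          obtain ⟨D, hD, rfl, rfl⟩ := invH A ts b y h1
          exact ⟨.brk D [] [], by simp [PCtx.plug, hD], by simp [cpre, flatH],
            by simp [cpost, flatH]⟩
theorem invH (A : PTy) : (ts : List PTree) → (pre post : List Tok) →
    flatH ts = pre ++ ty A :: post →
    ∃ D : PCtx, ts = D.plug [.leaf A] ∧ cpre D = pre ∧ cpost D = post
  | [], pre, post, h => by simp [flatH] at h
  | t :: ts, pre, post, h => by
    rw [flatH] at h
    rcases List.append_eq_append_iff.1 h with ⟨c, rfl, h2⟩ | ⟨c, h1, h2⟩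
    · obtain ⟨D, hD, rfl, rfl⟩ := invH A ts _ _ h2
      exact ⟨comp (.hole [t] []) D, by rw [plug_comp, ← hD]; simp [PCtx.plug],
        by cases D <;> simp [comp, cpre, flatH],
        by cases D <;> simp [comp, cpost]⟩
    · cases c with
      | nil =>
        obtain ⟨D, hD, h3, rfl⟩ := invH A ts [] _ h2.symm
        simp only [List.append_nil] at h1
        exact ⟨comp (.hole [t] []) D, by rw [plug_comp, ← hD]; simp [PCtx.plug],
          by cases D <;> simp_all [comp, cpre, flatH],
          by cases D <;> simp [comp, cpost]⟩
      | cons x y =>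
        simp only [List.cons_append, List.cons.injEq] at h2
        obtain ⟨rfl, rfl⟩ := h2
        obtain ⟨D, hD, rfl, rfl⟩ := invT A t _ _ h1
        exact ⟨comp (.hole [] ts) D, by rw [plug_comp, ← hD]; simp [PCtx.plug],
          by cases D <;> simp [comp, cpre, flatH],
          by cases D <;> simp [comp, cpost, flatH_append]⟩
end

theorem flat_eq_nil {X : PHedge} (h : flatH X = []) : X = [] := by
  cases X with
  | nil => rfl
  | cons t ts => cases t <;> simp [flatH, flatT] at h

theorem flat_ne_rb {X : PHedge} {w} : flatH X ≠ rb :: w := by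
  intro h
  have := (flatH_bal X).2 [rb] w (by simp [h])
  simp at this

theorem flat_ne_lb {X : PHedge} {w} : flatH X ≠ w ++ [lb] := by
  intro h
  have := (flatH_bal X).2 w [lb] (by simp [h])
  have h2 := (flatH_bal X).1
  rw [h] at h2
  simp at h2
  omega

theorem inv_next (D : PCtx) (B : PTy) (post) (h : cpost D = ty B :: post) :
    ∃ D' : PCtx, (∀ X, D.plug X = D'.plug (X ++ [.leaf B])) ∧ cpre D' = cpre D ∧
      cpost D' = post := by
  induction D generalizing post with
  | hole p q =>
    rw [cpost] at h
    cases q with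
    | nil => simp [flatH] at h
    | cons t ts =>
      cases t with
      | leaf A =>
        simp [flatH, flatT] at h
        obtain ⟨rfl, rfl⟩ := h
        exact ⟨.hole p ts, by simp [PCtx.plug], by simp [cpre], by simp [cpost]⟩
      | node a => simp [flatH, flatT] at h
  | brk c p q ih =>
    rw [cpost] at h
    cases hc : cpost c with
    | nil => simp [hc] at h
    | cons x y =>
      simp [hc] at h
      obtain ⟨rfl, rfl⟩ := h
      obtain ⟨D', h1, h2, h3⟩ := ih _ hc
      exact ⟨.brk D' p q, by simp [PCtx.plug, h1], by simp [cpre, h2], by simp [cpost, h3]⟩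

theorem inv_node (D : PCtx) (pre post) (h : cpost D = rb :: post) (h' : cpre D = pre ++ [lb]) :
    ∃ D' : PCtx, (∀ X, D.plug X = D'.plug [.node X]) ∧ cpre D' = pre ∧ cpost D' = post := by
  induction D generalizing pre post with
  | hole p q => exact absurd h flat_ne_rb
  | brk c p q ih =>
    rw [cpost] at h
    rw [cpre] at h'
    have key : (cpre c = [] ∧ flatH p = pre) ∨ ∃ x, cpre c = x ++ [lb] ∧ pre = flatH p ++ lb :: x := by
      rcases List.eq_nil_or_concat (cpre c) with h0 | ⟨x, t, h0⟩
      · left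
        rw [h0] at h'
        exact ⟨h0, (List.append_inj_left' h' rfl)⟩
      · right
        rw [h0] at h'
        have e : flatH p ++ lb :: (x.concat t) = (flatH p ++ lb :: x) ++ [t] := by simp
        rw [e] at h'
        have h1 := List.append_inj_left' h' rfl
        have h2 := List.append_inj_right' h' rfl
        simp at h2
        exact ⟨x, by simp [h0, h2], h1.symm⟩
    have key2 : (cpost c = [] ∧ flatH q = post) ∨ ∃ y, cpost c = rb :: y ∧ post = y ++ rb :: flatH q := by
      cases hc : cpost c with
      | nil => left; simpa [hc] using h
      | cons a b =>
        right
        simp [hc] at h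
        exact ⟨b, by simp [h.1], h.2.symm⟩
    rcases key with ⟨k1, k2⟩ | ⟨x, k1, k2⟩
    · cases c with
      | brk c' a b => simp [cpre] at k1
      | hole a b =>
        rcases key2 with ⟨k3, k4⟩ | ⟨y, k3, k4⟩
        · rw [cpre] at k1
          rw [cpost] at k3
          have := flat_eq_nil k1
          have := flat_eq_nil k3
          subst a b
          exact ⟨.hole p q, by simp [PCtx.plug], by simp [cpre, k2], by simp [cpost, k4]⟩
        · exact absurd k3 flat_ne_rb
    · rcases key2 with ⟨k3, k4⟩ | ⟨y, k3, k4⟩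
      · cases c with
        | brk c' a b => simp [cpost] at k3
        | hole a b => exact absurd k1 flat_ne_lb
      · obtain ⟨D', h1, h2, h3⟩ := ih _ _ k3 k1
        exact ⟨.brk D' p q, by simp [PCtx.plug, h1], by simp [cpre, h2, k2],
          by simp [cpost, h3, k4]⟩

/-- Provability of token sequents. -/
def TP (w : List Tok) (C : PTy) : Prop := ∃ G, flatH G = w ∧ PProvS G C

theorem TP.bal {w C} (h : TP w C) : Bal w := by
  obtain ⟨G, rfl, _⟩ := h
  exact flatH_bal G

theorem TP.id (A) : TP [ty A] A := ⟨[.leaf A], by simp [flatH, flatT], prov_id A⟩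

theorem TP.ldivL {g pre post A B C} (h1 : TP g A) (h2 : TP (pre ++ ty B :: post) C) :
    TP (pre ++ (g ++ ty (.ldiv A B) :: post)) C := by
  obtain ⟨G, rfl, hG⟩ := h1
  obtain ⟨X, hX, hP⟩ := h2
  obtain ⟨D, rfl, rfl, rfl⟩ := invH _ _ _ _ hX
  exact ⟨_, by simp [flat_plug, flatH_append, flatH, flatT], PProvS.ldivL G D A B C hG hP⟩

theorem TP.rdivL {g pre post A B C} (h1 : TP g A) (h2 : TP (pre ++ ty B :: post) C) :
    TP (pre ++ ty (.rdiv B A) :: (g ++ post)) C := by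
  obtain ⟨G, rfl, hG⟩ := h1
  obtain ⟨X, hX, hP⟩ := h2
  obtain ⟨D, rfl, rfl, rfl⟩ := invH _ _ _ _ hX
  exact ⟨_, by simp [flat_plug, flatH_append, flatH, flatT], PProvS.rdivL G D A B C hG hP⟩

theorem TP.ldivR {w A B} (h : TP (ty A :: w) B) : TP w (.ldiv A B) := by
  obtain ⟨X, hX, hP⟩ := h
  cases X with
  | nil => simp [flatH] at hX
  | cons t ts =>
    cases t with
    | node a => simp [flatH, flatT] at hX
    | leaf A' =>
      simp [flatH, flatT] at hX
      obtain ⟨rfl, rfl⟩ := hX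
      exact ⟨ts, rfl, .ldivR _ _ _ hP⟩

theorem TP.rdivR {w A B} (h : TP (w ++ [ty A]) B) : TP w (.rdiv B A) := by
  obtain ⟨X, hX, hP⟩ := h
  rcases List.eq_nil_or_concat X with rfl | ⟨ts, t, rfl⟩
  · simp [flatH] at hX
  · simp only [List.concat_eq_append, flatH_append] at hX hP
    cases t with
    | leaf A' =>
      simp only [flatH, flatT, List.append_nil] at hX
      have h1 := List.append_inj_left' hX rfl
      have h2 := List.append_inj_right' hX rfl
      simp at h2
      subst h2
      exact ⟨ts, h1, .rdivR _ _ _ hP⟩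
    | node a =>
      have e : flatH ts ++ flatH [PTree.node a] = (flatH ts ++ (lb :: flatH a)) ++ [rb] := by
        simp [flatH, flatT]
      rw [e] at hX
      have h2 := List.append_inj_right' hX rfl
      simp at h2

theorem TP.mulL {pre post A B C} (h : TP (pre ++ ([ty A, ty B] ++ post)) C) :
    TP (pre ++ ty (.mul A B) :: post) C := by
  obtain ⟨X, hX, hP⟩ := h
  obtain ⟨D, rfl, rfl, hq⟩ := invH A _ pre (ty B :: post) (by simpa using hX)
  obtain ⟨D', h1, h2, rfl⟩ := inv_next _ _ _ hq
  rw [h1] at hP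
  exact ⟨_, by simp [flat_plug, flatH_append, flatH, flatT, h2], PProvS.mulL D' A B C hP⟩

theorem TP.mulR {u v A B} (h1 : TP u A) (h2 : TP v B) : TP (u ++ v) (.mul A B) := by
  obtain ⟨G, rfl, hG⟩ := h1
  obtain ⟨X, rfl, hP⟩ := h2
  exact ⟨_, flatH_append _ _, .mulR _ _ _ _ hG hP⟩

theorem TP.diaL {pre post A C} (h : TP (pre ++ ([lb, ty A, rb] ++ post)) C) :
    TP (pre ++ ty (.dia A) :: post) C := by
  obtain ⟨X, hX, hP⟩ := h
  obtain ⟨D, rfl, hp, hq⟩ := invH A _ (pre ++ [lb]) (rb :: post) (by simpa using hX)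
  obtain ⟨D', h1, rfl, rfl⟩ := inv_node _ _ _ hq hp
  rw [h1] at hP
  exact ⟨_, by simp [flat_plug, flatH_append, flatH, flatT], PProvS.diaL D' A C hP⟩

theorem TP.diaR {w A} (h : TP w A) : TP (lb :: (w ++ [rb])) (.dia A) := by
  obtain ⟨G, rfl, hG⟩ := h
  exact ⟨[.node G], by simp [flatH, flatT], .diaR _ _ hG⟩

theorem TP.boxL {pre post A C} (h : TP (pre ++ ty A :: post) C) :
    TP (pre ++ lb :: ty (.box A) :: rb :: post) C := by
  obtain ⟨X, hX, hP⟩ := h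
  obtain ⟨D, rfl, rfl, rfl⟩ := invH _ _ _ _ hX
  exact ⟨_, by simp [flat_plug, flatH_append, flatH, flatT], PProvS.boxL D A C hP⟩

theorem TP.boxR {w A} (h : TP (lb :: (w ++ [rb])) A) (hw : Bal w) : TP w (.box A) := by
  obtain ⟨X, hX, hP⟩ := h
  cases X with
  | nil => simp [flatH] at hX
  | cons t ts =>
    cases t with
    | leaf a => simp [flatH, flatT] at hX
    | node g =>
      simp [flatH, flatT] at hX
      rcases List.append_eq_append_iff.1 hX with ⟨c, rfl, h2⟩ | ⟨c, h1, h2⟩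
      · cases c with
        | nil =>
          simp at h2
          have := flat_eq_nil h2
          subst this
          exact ⟨g, by simp, .boxR _ _ hP⟩
        | cons a b =>
          simp at h2
          have := hw.2 (flatH g ++ [rb]) b (by simp [h2.1])
          simp [(flatH_bal g).1] at this
      · cases c with
        | nil =>
          simp at h2
          have := flat_eq_nil h2
          subst this
          exact ⟨g, by simpa using h1, .boxR _ _ hP⟩
        | cons a b => simp at h2


open Tok

/-! ### Tree-like metrics -/

/-- Zero-hyperbolic integer pseudometrics. -/
structure Hyp (d : ℕ → ℕ → ℕ) : Prop where
  refl : ∀ x, d x x = 0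
  symm : ∀ x y, d x y = d y x
  four : ∀ a b c e, d a c + d b e ≤ max (d a b + d c e) (d a e + d b c)

theorem Hyp.tri {d} (h : Hyp d) (a b c : ℕ) : d a c ≤ d a b + d b c := by
  have h1 := h.four a b c b
  have h2 := h.refl b
  have h3 := h.symm c b
  omega

theorem Hyp.comap {d} (h : Hyp d) (f : ℕ → ℕ) : Hyp (fun i j => d (f i) (f j)) :=
  ⟨fun x => h.refl _, fun x y => h.symm _ _, fun a b c e => h.four _ _ _ _⟩

theorem Hyp.wedge {d1 d2} (h1 : Hyp d1) (h2 : Hyp d2) (f g : ℕ → ℕ) (a0 b0 : ℕ)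
    (hfg : ∀ k, f k = a0 ∨ g k = b0) :
    Hyp (fun i j => d1 (f i) (f j) + d2 (g i) (g j)) := by
  refine ⟨fun x => by simp [h1.refl, h2.refl], fun x y => by simp [h1.symm (f x), h2.symm (g x)], ?_⟩
  intro a b c e
  have F1 := h1.four (f a) (f b) (f c) (f e)
  have F2 := h2.four (g a) (g b) (g c) (g e)
  have r1 := h1.refl a0
  have r2 := h2.refl b0
  have s1 := h1.symm a0
  have s2 := h2.symm b0
  try dsimp only
  rcases hfg a with ha | ha <;> rcases hfg b with hb | hb <;> rcases hfg c with hc | hc <;>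
    rcases hfg e with he | he <;> simp only [ha, hb, hc, he, r1, r2, s1, s2] at * <;> omega

/-- The two-valued metric. -/
def disc (i j : ℕ) : ℕ := if i = j then 0 else 1

theorem disc_hyp : Hyp disc := by
  refine ⟨fun x => by simp [disc], fun x y => by simp [disc, eq_comm], ?_⟩
  intro a b c e
  simp only [disc]
  split_ifs <;> first | omega | (subst_vars; simp_all)

/-- Make the point `q` pendant. -/
def pend (d : ℕ → ℕ → ℕ) (q : ℕ) (i j : ℕ) : ℕ :=
  d i j + disc (if i = q then 1 else 0) (if j = q then 1 else 0)

theorem Hyp.pend {d} (h : Hyp d) (q : ℕ) : Hyp (pend d q) :=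
  h.wedge disc_hyp (fun i => i) (fun i => if i = q then 1 else 0) q 0 (fun k => by
    by_cases hk : k = q <;> simp [hk])

theorem le_pend (d : ℕ → ℕ → ℕ) (q i j) : d i j ≤ LB.pend d q i j := by
  simp [LB.pend]

theorem pend_le (d : ℕ → ℕ → ℕ) (q i j) : LB.pend d q i j ≤ d i j + 1 := by
  simp only [LB.pend, disc]
  split_ifs <;> omega

theorem pend_eq (d : ℕ → ℕ → ℕ) (q i j) (hi : i ≠ q) (hj : j ≠ q) : LB.pend d q i j = d i j := by
  simp [LB.pend, disc, hi, hj]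

theorem pend_left (d : ℕ → ℕ → ℕ) (q j) (hj : j ≠ q) : LB.pend d q q j = d q j + 1 := by
  simp [LB.pend, disc, hj]

theorem pend_right (d : ℕ → ℕ → ℕ) (q j) (hj : j ≠ q) : LB.pend d q j q = d j q + 1 := by
  simp [LB.pend, disc, hj]

/-! ### Splitting lists -/

theorem split3 {α : Type} {pre post U Δ V : List α} {t : α}
    (h : pre ++ t :: post = U ++ (Δ ++ V)) :
    (∃ P, pre = U ++ (Δ ++ P) ∧ V = P ++ t :: post) ∨
    (∃ P Q, pre = U ++ P ∧ Δ = P ++ t :: Q ∧ post = Q ++ V) ∨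
    (∃ P, U = pre ++ t :: P ∧ post = P ++ (Δ ++ V)) := by
  rcases List.append_eq_append_iff.1 h with ⟨c, rfl, h2⟩ | ⟨c, rfl, h2⟩
  · cases c with
    | nil =>
      cases Δ with
      | nil => left; exact ⟨[], by simp, by simpa using h2.symm⟩
      | cons a b =>
        simp at h2
        right; left
        exact ⟨[], b, by simp, by simp [h2.1], h2.2⟩
    | cons a b =>
      simp at h2
      right; right
      exact ⟨b, by simp [h2.1], by simp [h2.2]⟩
  · rcases List.append_eq_append_iff.1 h2 with ⟨e, rfl, h3⟩ | ⟨e, rfl, h3⟩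
    · left; exact ⟨e, by simp, h3⟩
    · cases e with
      | nil => left; exact ⟨[], by simp, by simpa using h3.symm⟩
      | cons a b =>
        simp at h3
        right; left
        exact ⟨c, b, by simp, by simp [h3.1], h3.2⟩

theorem split2 {α : Type} {pre post U V : List α} {s t : α}
    (h : pre ++ s :: post = U ++ t :: V) :
    (∃ P, pre = U ++ t :: P ∧ V = P ++ s :: post) ∨
    (U = pre ∧ t = s ∧ V = post) ∨
    (∃ P, U = pre ++ s :: P ∧ post = P ++ t :: V) := by
  rcases split3 (U := U) (Δ := [t]) (V := V) (by simpa using h) with ⟨P, h1, h2⟩ | ⟨P, Q, h1, h2, h3⟩ | ⟨P, h1, h2⟩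
  · left; exact ⟨P, by simpa using h1, h2⟩
  · right; left
    cases P with
    | nil => simp at h2 h1 h3; obtain ⟨rfl, rfl⟩ := h2; simp_all
    | cons a b => simp at h2
  · right; right; exact ⟨P, h1, by simpa using h2⟩

theorem split1 {α : Type} {pre post U V : List α} {t : α}
    (h : pre ++ post = U ++ t :: V) :
    (∃ P, pre = U ++ t :: P ∧ V = P ++ post) ∨
    (∃ P, U = pre ++ P ∧ post = P ++ t :: V) := by
  rcases List.append_eq_append_iff.1 h with ⟨c, rfl, h2⟩ | ⟨c, rfl, h2⟩
  · right; exact ⟨c, rfl, h2⟩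
  · cases c with
    | nil => right; exact ⟨[], by simp, by simpa using h2.symm⟩
    | cons a b =>
      simp at h2
      left; exact ⟨b, by simp [h2.1], h2.2⟩

theorem split4 {α : Type} {pre g U Δ V : List α} (h : pre ++ g = U ++ (Δ ++ V)) :
    (∃ P, pre = U ++ (Δ ++ P) ∧ V = P ++ g) ∨
    (∃ P G, pre = U ++ P ∧ Δ = P ++ G ∧ g = G ++ V ∧ P ≠ [] ∧ G ≠ []) ∨
    (∃ P, U = pre ++ P ∧ g = P ++ (Δ ++ V)) := by
  rcases List.append_eq_append_iff.1 h with ⟨c, rfl, h2⟩ | ⟨c, rfl, h2⟩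
  · right; right; exact ⟨c, rfl, h2⟩
  · rcases List.append_eq_append_iff.1 h2 with ⟨e, rfl, h3⟩ | ⟨e, rfl, h3⟩
    · left; exact ⟨e, by simp, h3⟩
    · by_cases hc : c = []
      · subst hc
        right; right; exact ⟨[], by simp, by simp [h3]⟩
      · by_cases he : e = []
        · subst he
          left; exact ⟨[], by simp, by simpa using h3.symm⟩
        · right; left; exact ⟨c, e, rfl, rfl, h3, hc, he⟩

/-! ### Good decorations -/

/-- Token length. -/
def tlen : Tok → ℕ
  | ty A => lenP A
  | lb => 1
  | rb => 1

/-- A decoration of the gaps of a sequent by a tree-like metric controlling interpolants. -/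
structure Good (B : Finset ℕ) (w : List Tok) (C : PTy) (d : ℕ → ℕ → ℕ) : Prop where
  hyp : Hyp d
  tok : ∀ U t V, w = U ++ t :: V → d U.length (U.length + 1) ≤ tlen t
  whole : d 0 w.length ≤ lenP C
  interp : ∀ U Δ V, w = U ++ (Δ ++ V) → Δ ≠ [] → Bal Δ →
    ∃ E : PTy, E.over B ∧ lenP E ≤ d U.length (U.length + Δ.length) ∧ TP Δ E ∧
      TP (U ++ ty E :: V) C

theorem good_id (B : Finset ℕ) (p : ℕ) (hp : p ∈ B) :
    Good B [ty (.prim p)] (.prim p) disc := by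
  refine ⟨disc_hyp, ?_, by simp [disc, lenP], ?_⟩
  · intro U t V h
    cases U with
    | nil => simp at h; simp [← h.1, tlen, lenP, disc]
    | cons a b => simp at h
  · intro U Δ V h hne hb
    cases U with
    | nil =>
      cases Δ with
      | nil => simp at hne
      | cons a b =>
        simp at h
        obtain ⟨rfl, rfl, rfl⟩ := h
        exact ⟨.prim p, hp, by simp [lenP, disc], TP.id _, TP.id _⟩
    | cons a b => simp at h; simp [h] at hne

theorem good_subst {B pre X post C d T} (h : Good B (pre ++ (X ++ post)) C d)
    (hX : Bal X) (hX0 : X ≠ [])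
    (hT : d pre.length (pre.length + X.length) ≤ lenP T)
    (rule : ∀ p q C', TP (p ++ (X ++ q)) C' → TP (p ++ ty T :: q) C') :
    ∃ d', Good B (pre ++ ty T :: post) C d' := by
  obtain ⟨n, hn⟩ : ∃ n, X.length = n + 1 := by
    cases X with
    | nil => simp at hX0
    | cons a b => exact ⟨b.length, rfl⟩
  let φ : ℕ → ℕ := fun k => if k ≤ pre.length then k else k + n
  have φ1 : ∀ k, k ≤ pre.length → φ k = k := fun k hk => by simp [φ, hk]
  have φ2 : ∀ k, pre.length < k → φ k = k + n := fun k hk => by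
    simp [φ, Nat.not_le.2 hk]
  refine ⟨fun i j => d (φ i) (φ j), h.hyp.comap φ, ?_, ?_, ?_⟩
  · intro U t V hw
    try dsimp only
    rcases split2 hw with ⟨P, hP, rfl⟩ | ⟨rfl, rfl, rfl⟩ | ⟨P, rfl, rfl⟩
    · have := h.tok U t (P ++ (X ++ post)) (by simp [hP])
      have hl : pre.length = U.length + (P.length + 1) := by simp [hP]
      rwa [φ1 _ (by omega), φ1 _ (by omega)]
    · rw [φ1 _ le_rfl, φ2 _ (by omega)]
      rwa [hn, ← add_assoc, add_right_comm] at hT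
    · have := h.tok (pre ++ (X ++ P)) t V (by simp)
      rw [φ2 _ (by simp), φ2 _ (by simp <;> omega)]
      refine le_of_eq_of_le ?_ this
      congr 1 <;> simp [hn] <;> omega
  · have := h.whole
    try dsimp only
    rw [φ1 _ (by omega), φ2 _ (by simp)]
    refine le_of_eq_of_le ?_ this
    congr 1; simp [hn]; omega
  · intro U Δ V hw hne hb
    try dsimp only
    rcases split3 hw with ⟨P, hP, rfl⟩ | ⟨P, Q, rfl, rfl, rfl⟩ | ⟨P, rfl, rfl⟩
    · obtain ⟨E, h1, h2, h3, h4⟩ := h.interp U Δ (P ++ (X ++ post)) (by simp [hP]) hne hb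
      have hl : pre.length = U.length + (Δ.length + P.length) := by simp [hP]
      refine ⟨E, h1, ?_, h3, ?_⟩
      · rwa [φ1 _ (by omega), φ1 _ (by omega)]
      · have := rule (U ++ ty E :: P) post C (by simpa using h4)
        simpa using this
    · have hb' : Bal (P ++ (X ++ Q)) :=
        Bal.subst (X := [ty T]) X (by simpa using hb) (Bal.ty T) hX
      obtain ⟨E, h1, h2, h3, h4⟩ := h.interp U (P ++ (X ++ Q)) V (by simp)
        (by simp [hX0]) hb'
      refine ⟨E, h1, ?_, rule _ _ _ h3, h4⟩
      rw [φ1 _ (by simp), φ2 _ (by simp <;> omega)]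
      refine le_of_le_of_eq h2 ?_
      congr 1; simp [hn]; omega
    · obtain ⟨E, h1, h2, h3, h4⟩ := h.interp (pre ++ (X ++ P)) Δ V (by simp) hne hb
      refine ⟨E, h1, ?_, h3, ?_⟩
      · rw [φ2 _ (by simp), φ2 _ (by simp; omega)]
        refine le_of_le_of_eq h2 ?_
        congr 1 <;> simp [hn] <;> omega
      · have := rule pre (P ++ ty E :: V) C (by simpa using h4)
        simpa using this

theorem good_shift {B x w y A C' d} (h : Good B (x ++ (w ++ y)) A d) (hw : Bal w)
    (hd : d x.length (x.length + w.length) ≤ lenP C')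
    (rule : ∀ w', Bal w' → TP (x ++ (w' ++ y)) A → TP w' C') :
    ∃ d', Good B w C' d' := by
  refine ⟨fun i j => d (x.length + i) (x.length + j), h.hyp.comap _, ?_, by simpa using hd, ?_⟩
  · intro U t V hU
    have := h.tok (x ++ U) t (V ++ y) (by simp [hU])
    simpa [add_assoc] using this
  · intro U Δ V hU hne hb
    obtain ⟨E, h1, h2, h3, h4⟩ := h.interp (x ++ U) Δ (V ++ y) (by simp [hU]) hne hb
    refine ⟨E, h1, by simpa [add_assoc] using h2, h3, ?_⟩
    apply rule
    · exact Bal.subst (X := Δ) [ty E] (by simpa [hU] using hw) hb (Bal.ty E)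
    · simpa using h4

theorem good_mulR {B u v A C d1 d2} (h1 : Good B u A d1) (h2 : Good B v C d2)
    (hu : TP u A) (hv : TP v C) : ∃ d, Good B (u ++ v) (.mul A C) d := by
  let f : ℕ → ℕ := fun k => min k u.length
  let g : ℕ → ℕ := fun k => k - u.length
  have f1 : ∀ k, k ≤ u.length → f k = k := fun k hk => by simp [f, hk]
  have f2 : ∀ k, u.length ≤ k → f k = u.length := fun k hk => by simp [f, hk]
  have g1 : ∀ k, k ≤ u.length → g k = 0 := fun k hk => by simp [g, hk]
  have g2 : ∀ k, g (u.length + k) = k := fun k => by simp [g]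
  have r1 := h1.hyp.refl
  have r2 := h2.hyp.refl
  refine ⟨fun i j => d1 (f i) (f j) + d2 (g i) (g j),
    h1.hyp.wedge h2.hyp f g u.length 0 (fun k => ?_), ?_, ?_, ?_⟩
  · rcases le_total k u.length with hk | hk
    · right; exact g1 k hk
    · left; exact f2 k hk
  · intro U t V hw
    try dsimp only
    rcases split1 hw with ⟨P, hP, rfl⟩ | ⟨P, rfl, rfl⟩
    · have := h1.tok U t P hP
      have hl : u.length = U.length + (P.length + 1) := by simp [hP]
      rw [f1 _ (by omega), f1 _ (by omega), g1 _ (by omega), g1 _ (by omega), r2]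
      simpa using this
    · have := h2.tok P t V rfl
      rw [f2 _ (by simp), f2 _ (by simp; omega), r1]
      simpa [add_assoc, g2] using this
  · have a := h1.whole
    have b := h2.whole
    try dsimp only
    rw [f1 _ (by omega), g1 _ (by omega), f2 _ (by simp)]
    simp only [List.length_append, g2, lenP]
    omega
  · intro U Δ V hw hne hb
    try dsimp only
    rcases split4 hw with ⟨P, rfl, rfl⟩ | ⟨P, G, rfl, rfl, rfl, hP, hG⟩ | ⟨P, rfl, rfl⟩
    · obtain ⟨E, e1, e2, e3, e4⟩ := h1.interp U Δ P rfl hne hb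
      refine ⟨E, e1, ?_, e3, ?_⟩
      · rw [f1 _ (by simp), f1 _ (by simp <;> omega)]
        omega
      · have := TP.mulR e4 hv
        simpa using this
    · have bG : Bal G := Bal.mid hb hv.bal
      have bP : Bal P := hb.left bG
      obtain ⟨E, e1, e2, e3, e4⟩ := h1.interp U P [] (by simp) hP bP
      obtain ⟨F, k1, k2, k3, k4⟩ := h2.interp [] G V (by simp) hG bG
      refine ⟨.mul E F, ⟨e1, k1⟩, ?_, TP.mulR e3 k3, ?_⟩
      · rw [f1 _ (by simp), f2 _ (by simp), g1 _ (by simp)]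
        have : U.length + (P ++ G).length = (U ++ P).length + G.length := by simp; omega
        rw [this, g2]
        simp at k2 ⊢
        simp [lenP]; omega
      · apply TP.mulL
        have := TP.mulR e4 k4
        simpa using this
    · obtain ⟨E, e1, e2, e3, e4⟩ := h2.interp P Δ V rfl hne hb
      refine ⟨E, e1, ?_, e3, ?_⟩
      · simp only [List.length_append, add_assoc, g2]
        omega
      · have := TP.mulR hu e4
        simpa using this

theorem good_diaR {B w A d} (h : Good B w A d) (hw : TP w A) (hne : w ≠ []) :
    ∃ d, Good B (lb :: (w ++ [rb])) (.dia A) d := by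
  let φ : ℕ → ℕ := fun k => min (k - 1) w.length
  let n := w.length
  let d0 : ℕ → ℕ → ℕ := fun i j => d (φ i) (φ j)
  have hd0 : Hyp d0 := h.hyp.comap φ
  have φ0 : φ 0 = 0 := by simp [φ]
  have φ1 : ∀ k, k ≤ n → φ (k + 1) = k := fun k hk => by
    simp only [φ, n] at *; omega
  have φ2 : φ (n + 2) = n := by simp only [φ, n] at *; omega
  have key : ∀ i j, i ≤ n → j ≤ n → pend (pend d0 0) (n + 2) (i + 1) (j + 1) = d i j := by
    intro i j hi hj
    rw [pend_eq _ _ _ _ (by omega) (by omega), pend_eq _ _ _ _ (by omega) (by omega)]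
    simp only [d0]
    rw [φ1 _ hi, φ1 _ hj]
  have key2 : pend (pend d0 0) (n + 2) 0 (n + 2) = d 0 n + 2 := by
    rw [pend_right _ _ _ (by omega), pend_left _ _ _ (by omega)]
    simp only [d0]
    rw [φ0, φ2]
  refine ⟨pend (pend d0 0) (n + 2), (hd0.pend 0).pend (n + 2), ?_, ?_, ?_⟩
  · intro U t V hU
    cases U with
    | nil =>
      simp at hU
      rw [← hU.1]
      show pend (pend d0 0) (n + 2) 0 1 ≤ 1
      rw [pend_eq _ _ _ _ (by omega) (by omega)]
      refine (pend_le _ _ _ _).trans ?_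
      have := φ1 0 (by omega)
      simp only [d0]
      rw [φ0, h.hyp.refl]
    | cons a U =>
      simp only [List.cons_append, List.cons.injEq] at hU
      obtain ⟨rfl, hU⟩ := hU
      have hU' : w ++ rb :: [] = U ++ t :: V := hU
      rcases split2 hU' with ⟨P, hP, rfl⟩ | ⟨rfl, rfl, rfl⟩ | ⟨P, rfl, hP⟩
      · have := h.tok U t P hP
        have hl : n = U.length + (P.length + 1) := by simp [n, hP]
        simp only [List.length_cons]
        rw [key _ _ (by omega) (by omega)]
        exact this
      · show pend (pend d0 0) (n + 2) (n + 1) (n + 2) ≤ 1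
        refine (pend_le _ _ _ _).trans ?_
        rw [pend_eq _ _ _ _ (by omega) (by omega)]
        simp only [d0]
        rw [φ1 _ le_rfl, φ2, h.hyp.refl]
      · simp at hP
  · have : (lb :: (w ++ [rb])).length = n + 2 := by simp [n]
    rw [this, key2]
    have := h.whole
    simp only [lenP, n]; omega
  · intro U Δ V hU hΔ hb
    have hwb := hw.bal
    cases U with
    | nil =>
      cases Δ with
      | nil => simp at hΔ
      | cons a Δ =>
        simp only [List.cons_append, List.nil_append, List.cons.injEq] at hU
        obtain ⟨rfl, hU⟩ := hU
        rcases List.eq_nil_or_concat V with rfl | ⟨V, v, rfl⟩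
        · simp at hU
          subst hU
          obtain ⟨E, e1, e2, e3, e4⟩ := h.interp [] w [] (by simp) hne hwb
          refine ⟨.dia E, e1, ?_, TP.diaR e3, ?_⟩
          · have : (lb :: (w ++ [rb])).length = n + 2 := by simp [n]
            rw [this]
            simp only [List.length_nil, Nat.zero_add] at e2 ⊢
            rw [key2]
            simp only [lenP, n]; omega
          · have := TP.diaL (pre := []) (post := []) (by simpa using TP.diaR e4)
            simpa using this
        · exfalso
          rw [List.concat_eq_append, ← List.append_assoc] at hU
          have := List.append_inj_left' hU rfl
          have k := hwb.2 _ _ this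
          have k' := hb.1
          simp at k'
          omega
    | cons a U =>
      simp only [List.cons_append, List.cons.injEq] at hU
      obtain ⟨rfl, hU⟩ := hU
      rcases List.eq_nil_or_concat V with rfl | ⟨V, v, rfl⟩
      · exfalso
        rcases List.eq_nil_or_concat Δ with rfl | ⟨Δ, t, rfl⟩
        · simp at hΔ
        · rw [List.append_nil, List.concat_eq_append, ← List.append_assoc] at hU
          have q1 := List.append_inj_left' hU rfl
          have q2 := List.append_inj_right' hU rfl
          simp at q2
          subst q2
          have k := hwb.2 _ _ q1
          have k' := hb.1
          have k2 := hwb.1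
          simp [q1] at k' k2
          omega
      · have e : U ++ (Δ ++ V.concat v) = (U ++ (Δ ++ V)) ++ [v] := by simp
        rw [e] at hU
        have q1 := List.append_inj_left' hU rfl
        have q2 := List.append_inj_right' hU rfl
        simp at q2
        subst q2
        obtain ⟨E, e1, e2, e3, e4⟩ := h.interp U Δ V q1 hΔ hb
        have hl : n = U.length + (Δ.length + V.length) := by simp [n, q1]
        refine ⟨E, e1, ?_, e3, ?_⟩
        · have : (lb :: U).length + Δ.length = (U.length + Δ.length) + 1 := by simp; omega
          rw [this, List.length_cons, key _ _ (by omega) (by omega)]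
          exact e2
        · have := TP.diaR e4
          simpa using this


open Tok

theorem HP.toP {G C} (h : HP G C) : PProvS G C := by
  induction h with
  | id p => exact .id p
  | ldivL _ _ _ _ _ _ _ h1 h2 => exact .ldivL _ _ _ _ _ h1 h2
  | rdivL _ _ _ _ _ _ _ h1 h2 => exact .rdivL _ _ _ _ _ h1 h2
  | ldivR _ _ _ _ h1 => exact .ldivR _ _ _ h1
  | rdivR _ _ _ _ h1 => exact .rdivR _ _ _ h1
  | mulL _ _ _ _ _ h1 => exact .mulL _ _ _ _ h1
  | mulR _ _ _ _ _ _ h1 h2 => exact .mulR _ _ _ _ h1 h2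
  | diaL _ _ _ _ h1 => exact .diaL _ _ _ h1
  | diaR _ _ _ h1 => exact .diaR _ _ h1
  | boxL _ _ _ _ h1 => exact .boxL _ _ _ h1
  | boxR _ _ _ h1 => exact .boxR _ _ h1

theorem good_boxL {B pre post A C d} (h : Good B (pre ++ ty A :: post) C d) :
    ∃ d, Good B (pre ++ lb :: ty (.box A) :: rb :: post) C d := by
  obtain ⟨p, hp⟩ : ∃ p, p = pre.length := ⟨_, rfl⟩
  let φ : ℕ → ℕ := fun k => if k ≤ p then k else if k ≤ p + 2 then k - 1 else k - 2
  let d0 : ℕ → ℕ → ℕ := fun i j => d (φ i) (φ j)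
  have hd0 : Hyp d0 := h.hyp.comap φ
  let d' := pend (pend d0 (p + 1)) (p + 2)
  have keep : ∀ i j i' j', i ≠ p + 1 → i ≠ p + 2 → j ≠ p + 1 → j ≠ p + 2 →
      φ i = i' → φ j = j' → d' i j = d i' j' := by
    rintro i j _ _ h1 h2 h3 h4 rfl rfl
    simp only [d']
    rw [pend_eq _ _ _ _ h2 h4, pend_eq _ _ _ _ h1 h3]
  have hbox : d' (p + 1) (p + 2) = d p (p + 1) + 2 := by
    simp only [d']
    rw [pend_right _ _ _ (by omega), pend_left _ _ _ (by omega)]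
    simp [d0, φ]
  have htA := h.tok pre (ty A) post rfl
  rw [← hp] at htA
  refine ⟨d', (hd0.pend _).pend _, ?_, ?_, ?_⟩
  · intro U t V hw
    rcases split2 hw with ⟨P, hP, rfl⟩ | ⟨rfl, rfl, rfl⟩ | ⟨P, rfl, hP⟩
    · have hl : pre.length = U.length + (P.length + 1) := by simp [hP]
      have := h.tok U t (P ++ ty A :: post) (by simp [hP])
      rwa [keep _ _ U.length (U.length + 1) (by omega) (by omega) (by omega) (by omega)]
      · simp only [φ]; split_ifs <;> omega
      · simp only [φ]; split_ifs <;> omega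
    · rw [← hp]
      simp only [d']
      rw [pend_eq _ _ _ _ (by omega) (by omega), pend_right _ _ _ (by omega)]
      simp [d0, φ, h.hyp.refl, tlen]
    · cases P with
      | nil =>
        simp at hP
        obtain ⟨rfl, rfl⟩ := hP
        have : (pre ++ [lb]).length = p + 1 := by simp [hp]
        rw [this, hbox]
        simp only [tlen, lenP] at *
        omega
      | cons a P =>
        simp only [List.cons_append, List.cons.injEq] at hP
        obtain ⟨rfl, hP⟩ := hP
        cases P with
        | nil =>
          simp at hP
          obtain ⟨rfl, rfl⟩ := hP
          have : (pre ++ [lb, ty (.box A)]).length = p + 2 := by simp [hp]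
          rw [this]
          simp only [d']
          rw [pend_left _ _ _ (by omega), pend_eq _ _ _ _ (by omega) (by omega)]
          simp [d0, φ, h.hyp.refl, tlen]
        | cons a P =>
          simp only [List.cons_append, List.cons.injEq] at hP
          obtain ⟨rfl, hP⟩ := hP
          have := h.tok (pre ++ ty A :: P) t V (by simp [hP])
          have hl : (pre ++ lb :: ty (.box A) :: rb :: P).length = p + 3 + P.length := by
            simp [hp]; omega
          have hl' : (pre ++ ty A :: P).length = p + 1 + P.length := by simp [hp]; omega
          rw [hl'] at this
          rw [hl]
          rwa [keep _ _ (p + 1 + P.length) (p + 1 + P.length + 1) (by omega) (by omega) (by omega) (by omega)]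
          · simp only [φ]; split_ifs <;> omega
          · simp only [φ]; split_ifs <;> omega
  · have := h.whole
    have hl : (pre ++ lb :: ty (.box A) :: rb :: post).length = p + 3 + post.length := by
      simp [hp]; omega
    have hl' : (pre ++ ty A :: post).length = p + 1 + post.length := by simp [hp]; omega
    rw [hl'] at this
    rw [hl]
    rwa [keep _ _ 0 (p + 1 + post.length) (by omega) (by omega) (by omega) (by omega)]
    · simp only [φ]; split_ifs <;> omega
    · simp only [φ]; split_ifs <;> omega
  · intro U Δ V hw hne hb
    have hw' : (pre ++ [lb]) ++ ty (.box A) :: (rb :: post) = U ++ (Δ ++ V) := by simpa using hw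
    rcases split3 hw' with ⟨P, hP, rfl⟩ | ⟨P, Q, hP, rfl, hQ⟩ | ⟨P, rfl, hP⟩
    · rcases List.eq_nil_or_concat P with rfl | ⟨P, v, rfl⟩
      · exfalso
        rcases List.eq_nil_or_concat Δ with rfl | ⟨Δ, v, rfl⟩
        · simp at hne
        · rw [List.append_nil, List.concat_eq_append, ← List.append_assoc] at hP
          have q2 := List.append_inj_right' hP rfl
          simp at q2
          subst q2
          have k1 := hb.1
          have k2 := hb.2 Δ [lb] (by simp)
          simp at k1
          omega
      · have e : U ++ (Δ ++ P.concat v) = (U ++ (Δ ++ P)) ++ [v] := by simp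
        rw [e] at hP
        have q1 := List.append_inj_left' hP rfl
        have q2 := List.append_inj_right' hP rfl
        simp at q2
        subst q2
        obtain ⟨E, e1, e2, e3, e4⟩ := h.interp U Δ (P ++ ty A :: post) (by simp [q1]) hne hb
        have hl : p = U.length + (Δ.length + P.length) := by simp [hp, q1]
        refine ⟨E, e1, ?_, e3, ?_⟩
        · rwa [keep _ _ U.length (U.length + Δ.length) (by omega) (by omega) (by omega) (by omega)]
          · simp only [φ]; split_ifs <;> omega
          · simp only [φ]; split_ifs <;> omega
        · have := TP.boxL (pre := U ++ ty E :: P) (post := post) (A := A) (C := C) (by simpa using e4)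
          simpa using this
    · rcases List.eq_nil_or_concat P with rfl | ⟨P, v, rfl⟩
      · cases Q with
        | nil =>
          simp at hP hQ
          subst hP hQ
          obtain ⟨E, e1, e2, e3, e4⟩ := h.interp pre [ty A] post (by simp) (by simp) (Bal.ty A)
          refine ⟨.box E, e1, ?_, ?_, ?_⟩
          · have : (pre ++ [lb]).length = p + 1 := by simp [hp]
            rw [this]
            simp only [List.nil_append, List.length_singleton]
            rw [hbox]
            simp only [lenP]
            simp [← hp] at e2
            omega
          · refine TP.boxR ?_ (Bal.ty _)
            have := TP.boxL (pre := []) (post := []) (A := A) (C := E) (by simpa using e3)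
            simpa using this
          · have := TP.boxL e4
            simpa using this
        | cons a Q =>
          exfalso
          simp only [List.cons_append, List.cons.injEq] at hQ
          obtain ⟨rfl, hQ⟩ := hQ
          have k2 := hb.2 [ty (.box A), rb] Q (by simp)
          simp at k2
      · have e : U ++ P.concat v = (U ++ P) ++ [v] := by simp
        rw [e] at hP
        have q1 := List.append_inj_left' hP rfl
        have q2 := List.append_inj_right' hP rfl
        simp at q2
        subst q2
        cases Q with
        | nil =>
          exfalso
          have k1 := hb.1
          have k2 := hb.2 P [lb, ty (.box A)] (by simp)
          simp at k1
          omega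
        | cons a Q =>
          simp only [List.cons_append, List.cons.injEq] at hQ
          obtain ⟨rfl, hQ⟩ := hQ
          have hb' : Bal (P ++ ([ty A] ++ Q)) :=
            Bal.subst (X := [lb, ty (.box A), rb]) [ty A] (by simpa using hb)
              (by simpa using Bal.node (Bal.ty (.box A))) (Bal.ty A)
          obtain ⟨E, e1, e2, e3, e4⟩ := h.interp U (P ++ ([ty A] ++ Q)) V (by simp [q1, hQ])
            (by simp) hb'
          have hl : p = U.length + P.length := by simp [hp, q1]
          have hl2 : U.length + (P.concat lb ++ ty (.box A) :: rb :: Q).length = p + 3 + Q.length := by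
            simp; omega
          have hl3 : U.length + (P ++ ([ty A] ++ Q)).length = p + 1 + Q.length := by
            simp; omega
          refine ⟨E, e1, ?_, ?_, e4⟩
          · rw [hl2]
            rw [hl3] at e2
            rwa [keep _ _ U.length (p + 1 + Q.length) (by omega) (by omega) (by omega) (by omega)]
            · simp only [φ]; split_ifs <;> omega
            · simp only [φ]; split_ifs <;> omega
          · have := TP.boxL (pre := P) (post := Q) (A := A) (C := E) (by simpa using e3)
            simpa using this
    · cases P with
      | nil =>
        exfalso
        cases Δ with
        | nil => simp at hne
        | cons a Δ =>
          simp at hP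
          obtain ⟨rfl, hP⟩ := hP
          have k2 := hb.2 [rb] Δ (by simp)
          simp at k2
      | cons a P =>
        simp only [List.cons_append, List.cons.injEq] at hP
        obtain ⟨rfl, hP⟩ := hP
        obtain ⟨E, e1, e2, e3, e4⟩ := h.interp (pre ++ ty A :: P) Δ V (by simp [hP]) hne hb
        have hl : (pre ++ [lb] ++ ty (.box A) :: rb :: P).length = p + 3 + P.length := by
          simp [hp]; omega
        have hl' : (pre ++ ty A :: P).length = p + 1 + P.length := by simp [hp]; omega
        rw [hl'] at e2
        refine ⟨E, e1, ?_, e3, ?_⟩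
        · rw [hl]
          rwa [keep _ _ (p + 1 + P.length) (p + 1 + P.length + Δ.length)
            (by omega) (by omega) (by omega) (by omega)]
          · simp only [φ]; split_ifs <;> omega
          · simp only [φ]; split_ifs <;> omega
        · have := TP.boxL (pre := pre) (post := P ++ ty E :: V) (A := A) (C := C) (by simpa using e4)
          simpa using this

open Tok

theorem good_ldivL {B g pre post A A' C d1 d2} (h1 : Good B g A d1)
    (h2 : Good B (pre ++ ty A' :: post) C d2) (hg : TP g A) (hw2 : TP (pre ++ ty A' :: post) C) :
    ∃ d, Good B (pre ++ (g ++ ty (.ldiv A A') :: post)) C d := by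
  obtain ⟨p, hp⟩ : ∃ p, p = pre.length := ⟨_, rfl⟩
  obtain ⟨n, hn⟩ : ∃ n, n = g.length := ⟨_, rfl⟩
  let α : ℕ → ℕ := fun k => if k ≤ p + n then k - p else 0
  let β : ℕ → ℕ := fun k => if k ≤ p then k else if k ≤ p + n then p else k - n
  have r1 := h1.hyp.refl
  have r2 := h2.hyp.refl
  let d : ℕ → ℕ → ℕ := fun i j => d1 (α i) (α j) + d2 (β i) (β j)
  have val : ∀ i j a b a' b', α i = a → α j = b → β i = a' → β j = b' →
      d i j = d1 a b + d2 a' b' := by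
    rintro i j _ _ _ _ rfl rfl rfl rfl; rfl
  have hgb := hg.bal
  refine ⟨d, h1.hyp.wedge h2.hyp α β 0 p (fun k => ?_), ?_, ?_, ?_⟩
  · simp only [α, β]; split_ifs <;> omega
  · intro U t V hw
    rw [← List.append_assoc] at hw
    rcases split2 hw with ⟨P, hP, rfl⟩ | ⟨rfl, rfl, rfl⟩ | ⟨P, rfl, rfl⟩
    · rcases split1 hP with ⟨P', rfl, rfl⟩ | ⟨P', rfl, rfl⟩
      · have := h2.tok U t (P' ++ ty A' :: post) (by simp)
        simp at hp
        rw [val _ _ 0 0 U.length (U.length + 1), r1]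
        · omega
        all_goals (simp only [α, β]; split_ifs <;> omega)
      · have := h1.tok P' t P rfl
        simp at hn
        simp only [List.length_append]
        rw [val _ _ P'.length (P'.length + 1) p p, r2]
        · omega
        all_goals (simp only [α, β]; split_ifs <;> omega)
    · have a := h1.whole
      have b := h2.tok _ _ _ rfl
      simp only [List.length_append]
      rw [val _ _ n 0 p (p + 1), h1.hyp.symm]
      · simp only [tlen, lenP, ← hp, ← hn] at *
        omega
      all_goals (simp only [α, β]; split_ifs <;> omega)
    · have := h2.tok (pre ++ ty A' :: P) t V (by simp)
      simp only [List.length_append, List.length_cons] at *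
      rw [val _ _ 0 0 (p + (P.length + 1)) (p + (P.length + 1) + 1), r1]
      · simpa [hp] using this
      all_goals (simp only [α, β]; split_ifs <;> omega)
  · have := h2.whole
    simp only [List.length_append, List.length_cons] at *
    rw [val _ _ 0 0 0 (p + (post.length + 1)), r1]
    · simpa [hp] using this
    all_goals (simp only [α, β]; split_ifs <;> omega)
  · intro U Δ V hw hne hb
    rw [← List.append_assoc] at hw
    rcases split3 hw with ⟨P, hP, rfl⟩ | ⟨P, Q, hP, rfl, rfl⟩ | ⟨P, rfl, rfl⟩
    · rcases split4 hP with ⟨P', rfl, rfl⟩ | ⟨P', G, rfl, rfl, rfl, hP0, hG0⟩ | ⟨P', rfl, rfl⟩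
      · obtain ⟨E, e1, e2, e3, e4⟩ := h2.interp U Δ (P' ++ ty A' :: post) (by simp) hne hb
        refine ⟨E, e1, ?_, e3, ?_⟩
        · simp at hp
          rw [val _ _ 0 0 U.length (U.length + Δ.length), r1]
          · omega
          all_goals (simp only [α, β]; split_ifs <;> omega)
        · have := TP.ldivL (pre := U ++ ty E :: P') hg (by simpa using e4)
          simpa using this
      · have bG : Bal G := Bal.mid hb hgb
        have bP : Bal P' := hb.left bG
        obtain ⟨E, e1, e2, e3, e4⟩ := h2.interp U P' (ty A' :: post) (by simp) hP0 bP
        obtain ⟨F, k1, k2, k3, k4⟩ := h1.interp [] G P (by simp) hG0 bG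
        refine ⟨.mul E F, ⟨e1, k1⟩, ?_, TP.mulR e3 k3, ?_⟩
        · simp at hp hn k2
          simp only [List.length_append]
          rw [val _ _ 0 G.length U.length (U.length + P'.length)]
          · simp only [lenP]; omega
          all_goals (simp only [α, β]; split_ifs <;> omega)
        · apply TP.mulL
          have := TP.ldivL (pre := U ++ [ty E]) (post := post) k4 (by simpa using e4)
          simpa using this
      · obtain ⟨E, e1, e2, e3, e4⟩ := h1.interp P' Δ P rfl hne hb
        refine ⟨E, e1, ?_, e3, ?_⟩
        · simp at hn
          simp only [List.length_append]
          rw [val _ _ P'.length (P'.length + Δ.length) p p, r2]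
          · omega
          all_goals (simp only [α, β]; split_ifs <;> omega)
        · have := TP.ldivL e4 hw2
          simpa using this
    · have first : ∀ P1, pre = U ++ P1 → P = P1 ++ g →
          ∃ E : PTy, E.over B ∧ lenP E ≤ d U.length (U.length + (P ++ ty (.ldiv A A') :: Q).length) ∧
            TP (P ++ ty (.ldiv A A') :: Q) E ∧ TP (U ++ ty E :: V) C := by
        rintro P1 rfl rfl
        have hb' : Bal (P1 ++ ([ty A'] ++ Q)) :=
          Bal.subst (X := g ++ [ty (.ldiv A A')]) [ty A'] (by simpa using hb)
            (hgb.append (Bal.ty _)) (Bal.ty A')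
        obtain ⟨E, e1, e2, e3, e4⟩ := h2.interp U (P1 ++ ([ty A'] ++ Q)) V (by simp)
          (by simp) hb'
        refine ⟨E, e1, ?_, ?_, e4⟩
        · simp only [List.length_append, List.length_cons, List.length_nil] at *
          rw [val _ _ 0 0 U.length (U.length + (P1.length + (0 + 1 + Q.length))), r1]
          · omega
          all_goals (simp only [α, β]; split_ifs <;> omega)
        · have := TP.ldivL (pre := P1) (post := Q) hg (by simpa using e3)
          simpa using this
      rcases List.append_eq_append_iff.1 hP with ⟨U', rfl, hU⟩ | ⟨P1, hU, hP1⟩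
      · by_cases hU0 : U' = []
        · subst hU0
          exact first [] (by simp) (by simpa using hU.symm)
        · subst hU
          have bP : Bal P := Bal.mid hgb hb
          have bU : Bal U' := hgb.left bP
          have bQ : Bal ([ty A'] ++ Q) := by
            have := hb.right bP
            exact Bal.subst (P := []) (X := [ty (.ldiv A A')]) [ty A'] (by simpa using this)
              (Bal.ty _) (Bal.ty A')
          obtain ⟨E1, e1, e2, e3, e4⟩ := h1.interp [] U' P (by simp) hU0 bU
          obtain ⟨E2, k1, k2, k3, k4⟩ := h2.interp pre ([ty A'] ++ Q) V (by simp) (by simp) bQ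
          refine ⟨.ldiv E1 E2, ⟨e1, k1⟩, ?_, ?_, ?_⟩
          · simp only [List.length_append, List.length_cons, List.length_nil, zero_add] at *
            rw [val _ _ U'.length 0 p (p + (1 + Q.length)), h1.hyp.symm]
            · simp only [lenP, hp] at *; omega
            all_goals (simp only [α, β]; split_ifs <;> omega)
          · apply TP.ldivR
            have := TP.ldivL (pre := []) (post := Q) e4 (by simpa using k3)
            simpa using this
          · have := TP.ldivL e3 k4
            simpa using this
      · exact first P1 hU hP1
    · obtain ⟨E, e1, e2, e3, e4⟩ := h2.interp (pre ++ ty A' :: P) Δ V (by simp) hne hb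
      refine ⟨E, e1, ?_, e3, ?_⟩
      · simp only [List.length_append, List.length_cons] at *
        rw [val _ _ 0 0 (p + (P.length + 1)) (p + (P.length + 1) + Δ.length), r1]
        · simp only [hp]; omega
        all_goals (simp only [α, β]; split_ifs <;> omega)
      · have := TP.ldivL (pre := pre) (post := P ++ ty E :: V) hg (by simpa using e4)
        simpa using this

theorem good_rdivL {B g pre post A A' C d1 d2} (h1 : Good B g A d1)
    (h2 : Good B (pre ++ ty A' :: post) C d2) (hg : TP g A) (hw2 : TP (pre ++ ty A' :: post) C) :
    ∃ d, Good B (pre ++ ty (.rdiv A' A) :: (g ++ post)) C d := by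
  obtain ⟨p, hp⟩ : ∃ p, p = pre.length := ⟨_, rfl⟩
  obtain ⟨n, hn⟩ : ∃ n, n = g.length := ⟨_, rfl⟩
  let α : ℕ → ℕ := fun k => if k ≤ p then n else if k ≤ p + 1 + n then k - p - 1 else n
  let β : ℕ → ℕ := fun k => if k ≤ p then k else if k ≤ p + 1 + n then p + 1 else k - n
  have r1 := h1.hyp.refl
  have r2 := h2.hyp.refl
  let d : ℕ → ℕ → ℕ := fun i j => d1 (α i) (α j) + d2 (β i) (β j)
  have val : ∀ i j a b a' b', α i = a → α j = b → β i = a' → β j = b' →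
      d i j = d1 a b + d2 a' b' := by
    rintro i j _ _ _ _ rfl rfl rfl rfl; rfl
  have hgb := hg.bal
  refine ⟨d, h1.hyp.wedge h2.hyp α β n (p + 1) (fun k => ?_), ?_, ?_, ?_⟩
  · simp only [α, β]; split_ifs <;> omega
  · intro U t V hw
    rcases split2 hw with ⟨P, rfl, rfl⟩ | ⟨rfl, rfl, rfl⟩ | ⟨P, rfl, hP⟩
    · have := h2.tok U t (P ++ ty A' :: post) (by simp)
      simp at hp
      rw [val _ _ n n U.length (U.length + 1), r1]
      · omega
      all_goals (simp only [α, β]; split_ifs <;> omega)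
    · have a := h1.whole
      have b := h2.tok _ _ _ rfl
      rw [val _ _ n 0 p (p + 1), h1.hyp.symm]
      · simp only [tlen, lenP, ← hp, ← hn] at *
        omega
      all_goals (simp only [α, β]; split_ifs <;> omega)
    · rcases split1 hP with ⟨P', rfl, rfl⟩ | ⟨P', rfl, rfl⟩
      · have := h1.tok P t P' rfl
        simp only [List.length_append, List.length_cons] at *
        rw [val _ _ P.length (P.length + 1) (p + 1) (p + 1), r2]
        · omega
        all_goals (simp only [α, β]; split_ifs <;> omega)
      · have := h2.tok (pre ++ ty A' :: P') t V (by simp)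
        simp only [List.length_append, List.length_cons] at *
        rw [val _ _ n n (p + (P'.length + 1)) (p + (P'.length + 1) + 1), r1]
        · simpa [hp] using this
        all_goals (simp only [α, β]; split_ifs <;> omega)
  · have := h2.whole
    simp only [List.length_append, List.length_cons] at *
    rw [val _ _ n n 0 (p + (post.length + 1)), r1]
    · simpa [hp] using this
    all_goals (simp only [α, β]; split_ifs <;> omega)
  · intro U Δ V hw hne hb
    rcases split3 hw with ⟨P, rfl, rfl⟩ | ⟨P, Q, rfl, rfl, hQ⟩ | ⟨P, rfl, hP⟩
    · obtain ⟨E, e1, e2, e3, e4⟩ := h2.interp U Δ (P ++ ty A' :: post) (by simp) hne hb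
      refine ⟨E, e1, ?_, e3, ?_⟩
      · simp at hp
        rw [val _ _ n n U.length (U.length + Δ.length), r1]
        · omega
        all_goals (simp only [α, β]; split_ifs <;> omega)
      · have := TP.rdivL (pre := U ++ ty E :: P) hg (by simpa using e4)
        simpa using this
    · have first : ∀ Q', Q = g ++ Q' → post = Q' ++ V →
          ∃ E : PTy, E.over B ∧ lenP E ≤ d U.length (U.length + (P ++ ty (.rdiv A' A) :: Q).length) ∧
            TP (P ++ ty (.rdiv A' A) :: Q) E ∧ TP (U ++ ty E :: V) C := by
        rintro Q' rfl rfl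
        have hb' : Bal (P ++ ([ty A'] ++ Q')) :=
          Bal.subst (X := [ty (.rdiv A' A)] ++ g) [ty A'] (by simpa using hb)
            ((Bal.ty _).append hgb) (Bal.ty A')
        obtain ⟨E, e1, e2, e3, e4⟩ := h2.interp U (P ++ ([ty A'] ++ Q')) V (by simp)
          (by simp) hb'
        refine ⟨E, e1, ?_, ?_, e4⟩
        · simp only [List.length_append, List.length_cons, List.length_nil] at *
          rw [val _ _ n n U.length (U.length + (P.length + (0 + 1 + Q'.length))), r1]
          · omega
          all_goals (simp only [α, β]; split_ifs <;> omega)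
        · have := TP.rdivL (pre := P) (post := Q') hg (by simpa using e3)
          simpa using this
      rcases List.append_eq_append_iff.1 hQ with ⟨Q', hQ1, hQ2⟩ | ⟨V', hV1, hV2⟩
      · exact first Q' hQ1 hQ2
      · by_cases hV0 : V' = []
        · subst hV0
          exact first [] (by simpa using hV1.symm) (by simpa using hV2.symm)
        · subst hV1 hV2
          have bQ : Bal Q := Bal.mid (u := P ++ [ty (.rdiv A' A)]) (by simpa using hb) hgb
          have bV : Bal V' := hgb.right bQ
          have bP : Bal (P ++ [ty A']) := by
            have := Bal.left (u := P ++ [ty (.rdiv A' A)]) (by simpa using hb) bQ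
            have := Bal.subst (Q := []) (X := [ty (.rdiv A' A)]) [ty A'] (by simpa using this)
              (Bal.ty _) (Bal.ty A')
            simpa using this
          obtain ⟨E1, e1, e2, e3, e4⟩ := h1.interp Q V' [] (by simp) hV0 bV
          obtain ⟨E2, k1, k2, k3, k4⟩ := h2.interp U (P ++ [ty A']) post (by simp) (by simp) bP
          refine ⟨.rdiv E2 E1, ⟨k1, e1⟩, ?_, ?_, ?_⟩
          · simp only [List.length_append, List.length_cons, List.length_nil, zero_add] at *
            rw [val _ _ (Q.length + V'.length) Q.length U.length (U.length + (P.length + 1)), h1.hyp.symm]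
            · simp only [lenP] at *; omega
            all_goals (simp only [α, β]; split_ifs <;> omega)
          · apply TP.rdivR
            have := TP.rdivL (pre := P) (post := []) e4 (by simpa using k3)
            simpa using this
          · have := TP.rdivL e3 k4
            simpa using this
    · rcases split4 hP with ⟨P', rfl, rfl⟩ | ⟨P', G, rfl, rfl, rfl, hP0, hG0⟩ | ⟨P', rfl, rfl⟩
      · obtain ⟨E, e1, e2, e3, e4⟩ := h1.interp P Δ P' rfl hne hb
        refine ⟨E, e1, ?_, e3, ?_⟩
        · simp only [List.length_append, List.length_cons] at *
          rw [val _ _ P.length (P.length + Δ.length) (p + 1) (p + 1), r2]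
          · omega
          all_goals (simp only [α, β]; split_ifs <;> omega)
        · have := TP.rdivL e4 hw2
          simpa using this
      · have bP : Bal P' := Bal.mid hgb hb
        have bG : Bal G := hb.right bP
        obtain ⟨E, e1, e2, e3, e4⟩ := h1.interp P P' [] (by simp) hP0 bP
        obtain ⟨F, k1, k2, k3, k4⟩ := h2.interp (pre ++ [ty A']) G V (by simp) hG0 bG
        have hG1 : 0 < G.length := List.length_pos_iff.2 hG0
        refine ⟨.mul E F, ⟨e1, k1⟩, ?_, TP.mulR e3 k3, ?_⟩
        · simp only [List.length_append, List.length_cons, List.length_nil, zero_add] at *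
          rw [val _ _ P.length (P.length + P'.length) (p + 1) (p + 1 + G.length)]
          · simp only [lenP, hp]; omega
          all_goals (simp only [α, β]; split_ifs <;> omega)
        · apply TP.mulL
          have := TP.rdivL (pre := pre) (post := ty F :: V) e4 (by simpa using k4)
          simpa using this
      · obtain ⟨E, e1, e2, e3, e4⟩ := h2.interp (pre ++ ty A' :: P') Δ V (by simp) hne hb
        refine ⟨E, e1, ?_, e3, ?_⟩
        · simp only [List.length_append, List.length_cons] at *
          rw [val _ _ n n (p + (P'.length + 1)) (p + (P'.length + 1) + Δ.length), r1]
          · simp only [hp]; omega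
          all_goals (simp only [α, β]; split_ifs <;> omega)
        · have := TP.rdivL (pre := pre) (post := P' ++ ty E :: V) hg (by simpa using e4)
          simpa using this

open Tok

/-- No empty brackets. -/
def Fat (w : List Tok) : Prop := ∀ U V, w ≠ U ++ ([lb, rb] ++ V)

theorem Fat.left {u v} (h : Fat (u ++ v)) : Fat u := by
  rintro U V rfl
  exact h U (V ++ v) (by simp)

theorem Fat.right {u v} (h : Fat (u ++ v)) : Fat v := by
  rintro U V rfl
  exact h (u ++ U) V (by simp)

theorem Fat.join {u v A} (hu : Fat u) (hv : Fat v) : Fat (u ++ ty A :: v) := by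
  intro U V h
  rcases split3 h with ⟨P, hP, _⟩ | ⟨P, Q, _, h2, _⟩ | ⟨P, _, hP⟩
  · exact hu _ _ hP
  · have : ty A ∈ [lb, rb] := by rw [h2]; simp
    simp at this
  · exact hv _ _ hP

theorem Fat.nil : Fat [] := by
  intro U V h
  simp at h

theorem Fat.snoc {u} (hu : Fat u) : Fat (u ++ [lb]) := by
  intro U V h
  rcases List.eq_nil_or_concat V with rfl | ⟨V, v, rfl⟩
  · have e : U ++ ([lb, rb] ++ []) = (U ++ [lb]) ++ [rb] := by simp
    rw [e] at h
    have q2 := List.append_inj_right' h rfl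
    simp at q2
  · have e : U ++ ([lb, rb] ++ V.concat v) = (U ++ ([lb, rb] ++ V)) ++ [v] := by simp
    rw [e] at h
    exact hu _ _ (List.append_inj_left' h rfl)

theorem Fat.cons {u} (hu : Fat u) : Fat (rb :: u) := by
  intro U V h
  cases U with
  | nil => simp at h
  | cons a U =>
    simp only [List.cons_append, List.cons.injEq] at h
    exact hu _ _ h.2

theorem Fat.node {w} (hw : Fat w) (hb : Bal w) (hne : w ≠ []) : Fat (lb :: (w ++ [rb])) := by
  intro U V h
  cases U with
  | nil =>
    cases w with
    | nil => simp at hne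
    | cons a w =>
      simp at h
      obtain ⟨rfl, h⟩ := h
      have := hb.2 [rb] w rfl
      simp at this
  | cons a U =>
    simp only [List.cons_append, List.cons.injEq] at h
    obtain ⟨rfl, h⟩ := h
    rcases List.eq_nil_or_concat V with rfl | ⟨V, v, rfl⟩
    · have e : U ++ lb :: rb :: ([] ++ []) = (U ++ [lb]) ++ [rb] := by simp
      rw [e] at h
      have q := List.append_inj_left' h rfl
      subst q
      have k1 := hb.1
      have k2 := hb.2 U [lb] rfl
      simp at k1
      omega
    · have e : U ++ lb :: rb :: ([] ++ V.concat v) = (U ++ ([lb, rb] ++ V)) ++ [v] := by simp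
      rw [e] at h
      exact hw _ _ (List.append_inj_left' h rfl)

/-- Key lemma: cut-free provable fat sequents carry good decorations. -/
theorem good_exists {B Γ C} (h : HP Γ C) : Fat (flatH Γ) → (∀ A, ty A ∈ flatH Γ → A.over B) →
    C.over B → ∃ d, Good B (flatH Γ) C d := by
  induction h with
  | id p =>
    intro _ _ hC
    exact ⟨disc, by simpa [flatH, flatT] using good_id B p hC⟩
  | ldivL G D A A' C hp1 hp2 ih1 ih2 =>
    intro hf ht hC
    have tp1 : TP (flatH G) A := ⟨_, rfl, hp1.toP⟩
    have tp2 : TP (cpre D ++ ty A' :: cpost D) C := ⟨_, by simp [flat_plug, flatH, flatT], hp2.toP⟩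
    simp only [flat_plug, flatH_append, flatH, flatT, List.append_nil, List.append_assoc,
      List.cons_append, List.nil_append] at *
    have hA := ht (.ldiv A A') (by simp)
    obtain ⟨d1, g1⟩ := ih1 hf.right.left (fun A h => ht A (by simp [h])) hA.1
    obtain ⟨d2, g2⟩ := ih2 (hf.left.join (Fat.right (u := [ty (.ldiv A A')]) hf.right.right)) (fun X h => by
      simp at h
      rcases h with h | h | h
      · exact ht X (by simp [h])
      · subst h; exact hA.2
      · exact ht X (by simp [h])) hC
    exact good_ldivL g1 g2 tp1 tp2
  | rdivL G D A A' C hp1 hp2 ih1 ih2 =>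
    intro hf ht hC
    have tp1 : TP (flatH G) A := ⟨_, rfl, hp1.toP⟩
    have tp2 : TP (cpre D ++ ty A' :: cpost D) C := ⟨_, by simp [flat_plug, flatH, flatT], hp2.toP⟩
    simp only [flat_plug, flatH_append, flatH, flatT, List.append_nil, List.append_assoc,
      List.cons_append, List.nil_append] at *
    have hA := ht (.rdiv A' A) (by simp)
    have hf2 : Fat (flatH G ++ cpost D) := Fat.right (u := [ty (.rdiv A' A)]) hf.right
    obtain ⟨d1, g1⟩ := ih1 hf2.left (fun A h => ht A (by simp [h])) hA.2
    obtain ⟨d2, g2⟩ := ih2 (hf.left.join hf2.right) (fun X h => by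
      simp at h
      rcases h with h | h | h
      · exact ht X (by simp [h])
      · subst h; exact hA.1
      · exact ht X (by simp [h])) hC
    exact good_rdivL g1 g2 tp1 tp2
  | ldivR G A A' hp ih =>
    intro hf ht hC
    simp only [flatH, flatT, List.cons_append, List.nil_append] at ih
    obtain ⟨d, g⟩ := ih (Fat.join (u := []) Fat.nil hf) (fun X h => by
      simp at h
      rcases h with h | h
      · subst h; exact hC.1
      · exact ht X h) hC.2
    refine good_shift (x := [ty A]) (w := flatH G) (y := []) (A := A') (d := d) (by simpa using g)
      (flatH_bal _) ?_ (fun w' _ h => TP.ldivR (by simpa using h))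
    have a := g.tok [] (ty A) _ rfl
    have b := g.whole
    have c := g.hyp.tri 1 0 ((flatH G).length + 1)
    have e := g.hyp.symm 0 1
    simp only [tlen, List.length_nil, List.length_cons, lenP, zero_add] at *
    rw [add_comm 1]
    omega
  | rdivR G A A' hp ih =>
    intro hf ht hC
    simp only [flatH, flatT, List.cons_append, List.nil_append, flatH_append, List.append_nil] at ih
    obtain ⟨d, g⟩ := ih (Fat.join (v := []) hf Fat.nil) (fun X h => by
      simp at h
      rcases h with h | h
      · exact ht X h
      · subst h; exact hC.2) hC.1
    refine good_shift (x := []) (w := flatH G) (y := [ty A]) (A := A') (d := d) (by simpa using g)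
      (flatH_bal _) ?_ (fun w' _ h => TP.rdivR (by simpa using h))
    have a := g.tok (flatH G) (ty A) [] rfl
    have b := g.whole
    have c := g.hyp.tri 0 ((flatH G).length + 1) (flatH G).length
    have e := g.hyp.symm (flatH G).length ((flatH G).length + 1)
    simp only [tlen, List.length_nil, List.length_cons, List.length_append, lenP, zero_add] at *
    omega
  | mulL D A A' C hp ih =>
    intro hf ht hC
    simp only [flat_plug, flatH, flatT, List.append_nil,
      List.cons_append, List.nil_append] at *
    have hA := ht (.mul A A') (by simp)
    have hfr : Fat (cpost D) := Fat.right (u := [ty (.mul A A')]) hf.right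
    obtain ⟨d, g⟩ := ih (hf.left.join (Fat.join (u := []) Fat.nil hfr)) (fun X h => by
      simp at h
      rcases h with h | h | h | h
      · exact ht X (by simp [h])
      · subst h; exact hA.1
      · subst h; exact hA.2
      · exact ht X (by simp [h])) hC
    refine good_subst (X := [ty A, ty A']) g ((Bal.ty A).append (Bal.ty A')) (by simp) ?_
      (fun p q C' h => TP.mulL h)
    have a := g.tok (cpre D) (ty A) _ rfl
    have b := g.tok (cpre D ++ [ty A]) (ty A') _ (by simp; rfl)
    have c := g.hyp.tri (cpre D).length ((cpre D).length + 1) ((cpre D).length + 2)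
    simp only [tlen, List.length_nil, List.length_cons, List.length_append, lenP, zero_add,
      add_assoc, Nat.reduceAdd] at *
    omega
  | mulR G D A A' hp1 hp2 ih1 ih2 =>
    intro hf ht hC
    rw [flatH_append] at *
    obtain ⟨d1, g1⟩ := ih1 hf.left (fun X h => ht X (by simp [h])) hC.1
    obtain ⟨d2, g2⟩ := ih2 hf.right (fun X h => ht X (by simp [h])) hC.2
    exact good_mulR g1 g2 ⟨_, rfl, hp1.toP⟩ ⟨_, rfl, hp2.toP⟩
  | diaL D A C hp ih =>
    intro hf ht hC
    simp only [flat_plug, flatH, flatT, List.append_nil,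
      List.cons_append, List.nil_append] at *
    have hA := ht (.dia A) (by simp)
    have hfr : Fat (cpost D) := Fat.right (u := [ty (.dia A)]) hf.right
    obtain ⟨d, g⟩ := ih (by simpa using hf.left.snoc.join (A := A) hfr.cons) (fun X h => by
      simp at h
      rcases h with h | h | h
      · exact ht X (by simp [h])
      · subst h; exact hA
      · exact ht X (by simp [h])) hC
    refine good_subst (X := [lb, ty A, rb]) g (Bal.node (Bal.ty A)) (by simp) ?_
      (fun p q C' h => TP.diaL h)
    have a := g.tok (cpre D) lb _ rfl
    have b := g.tok (cpre D ++ [lb]) (ty A) _ (by simp; rfl)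
    have b' := g.tok (cpre D ++ [lb, ty A]) rb _ (by simp; rfl)
    have c := g.hyp.tri (cpre D).length ((cpre D).length + 1) ((cpre D).length + 2)
    have c' := g.hyp.tri (cpre D).length ((cpre D).length + 2) ((cpre D).length + 3)
    simp only [tlen, List.length_nil, List.length_cons, List.length_append, lenP, zero_add,
      add_assoc, Nat.reduceAdd] at *
    omega
  | diaR G A hp ih =>
    intro hf ht hC
    simp only [flatH, flatT, List.append_nil, List.cons_append, List.nil_append] at *
    have hne : flatH G ≠ [] := by
      intro h
      rw [h] at hf
      exact hf [] [] (by simp)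
    obtain ⟨d, g⟩ := ih (Fat.left (Fat.right (u := [lb]) hf)) (fun X h => ht X (by simp [h])) hC
    exact good_diaR g ⟨_, rfl, hp.toP⟩ hne
  | boxL D A C hp ih =>
    intro hf ht hC
    simp only [flat_plug, flatH, flatT, List.append_nil,
      List.cons_append, List.nil_append] at *
    have hA := ht (.box A) (by simp)
    have hfr : Fat (cpost D) := Fat.right (u := [lb, ty (.box A), rb]) hf.right
    obtain ⟨d, g⟩ := ih (hf.left.join hfr) (fun X h => by
      simp at h
      rcases h with h | h | h
      · exact ht X (by simp [h])
      · subst h; exact hA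
      · exact ht X (by simp [h])) hC
    exact good_boxL g
  | boxR G A hp ih =>
    intro hf ht hC
    simp only [flatH, flatT, List.append_nil, List.cons_append, List.nil_append] at ih
    by_cases hne : flatH G = []
    · rw [hne]
      refine ⟨fun _ _ => 0, ⟨fun _ => rfl, fun _ _ => rfl, fun _ _ _ _ => by simp⟩, ?_, by simp, ?_⟩
      · intro U t V h
        simp at h
      · intro U Δ V h h'
        simp at h
        exact absurd h.2.1 h'
    · obtain ⟨d, g⟩ := ih (hf.node (flatH_bal _) hne) (fun X h => ht X (by simpa using h)) hC
      refine good_shift (x := [lb]) (w := flatH G) (y := [rb]) (A := A) (d := d) (by simpa using g)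
        (flatH_bal _) ?_ (fun w' hb h => TP.boxR (by simpa using h) hb)
      have a := g.tok [] lb _ rfl
      have a' := g.tok (lb :: flatH G) rb [] rfl
      have b := g.whole
      have c := g.hyp.tri 1 0 ((flatH G).length + 1)
      have c' := g.hyp.tri 0 ((flatH G).length + 1 + 1) ((flatH G).length + 1)
      have e := g.hyp.symm 0 1
      have e' := g.hyp.symm ((flatH G).length + 1) ((flatH G).length + 1 + 1)
      simp only [tlen, List.length_nil, List.length_cons, List.length_append, lenP, zero_add] at *
      rw [add_comm 1]
      omega

open Tok

/-- Bounded types. -/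
def SS (B : Finset ℕ) (m : ℕ) (A : PTy) : Prop := A.over B ∧ lenP A ≤ m

/-- Flat hedges. -/
abbrev fl (L : List PTy) : PHedge := L.map PTree.leaf

/-- Bracket elimination through small types. -/
inductive Par (B : Finset ℕ) (m : ℕ) : PHedge → List PTy → Prop where
  | nil : Par B m [] []
  | leaf (A Γ L) : SS B m A → Par B m Γ L → Par B m (.leaf A :: Γ) (A :: L)
  | node (Δ L' E F Γ L) : Par B m Δ L' → PProvS (fl L') E → PProvS [.node [.leaf E]] F →
      SS B m E → SS B m F → Par B m Γ L → Par B m (.node Δ :: Γ) (F :: L)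

theorem Par.mem {B m Γ L} (h : Par B m Γ L) : ∀ A ∈ L, SS B m A := by
  induction h with
  | nil => simp
  | leaf A Γ L hA _ ih => simpa using ⟨hA, ih⟩
  | node Δ L' E F Γ L _ _ _ _ hF _ _ ih => simpa using ⟨hF, ih⟩

theorem Par.append {B m Γ L Γ' L'} (h : Par B m Γ L) (h' : Par B m Γ' L') :
    Par B m (Γ ++ Γ') (L ++ L') := by
  induction h with
  | nil => simpa using h'
  | leaf A Γ L hA _ ih => exact .leaf _ _ _ hA ih
  | node Δ L' E F Γ L a b c e f _ _ ih => exact .node _ _ _ _ _ _ a b c e f ih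

theorem Par.split {B m} : ∀ {Γ Γ' L}, Par B m (Γ ++ Γ') L →
    ∃ L1 L2, L = L1 ++ L2 ∧ Par B m Γ L1 ∧ Par B m Γ' L2
  | [], Γ', L, h => ⟨[], L, rfl, .nil, h⟩
  | t :: Γ, Γ', L, h => by
    rw [List.cons_append] at h
    cases h with
    | leaf A _ L hA h =>
      obtain ⟨L1, L2, rfl, h1, h2⟩ := Par.split h
      exact ⟨A :: L1, L2, rfl, .leaf _ _ _ hA h1, h2⟩
    | node Δ L' E F _ L a b c e f h =>
      obtain ⟨L1, L2, rfl, h1, h2⟩ := Par.split h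
      exact ⟨F :: L1, L2, rfl, .node _ _ _ _ _ _ a b c e f h1, h2⟩

/-- Replacement of flattened hedges. -/
def Rep (B : Finset ℕ) (m : ℕ) (X Y : PHedge) : Prop :=
  ∀ LX, Par B m X LX → ∃ LY, Par B m Y LY ∧
    ∀ L1 L2 C, PProvS (fl (L1 ++ LX ++ L2)) C → PProvS (fl (L1 ++ LY ++ L2)) C

theorem Rep.plug {B m X Y} (h : Rep B m X Y) (D : PCtx) : Rep B m (D.plug X) (D.plug Y) := by
  induction D with
  | hole p q =>
    intro L hL
    obtain ⟨L12, L3, rfl, h12, h3⟩ := hL.split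
    obtain ⟨L1, L2, rfl, h1, h2⟩ := h12.split
    obtain ⟨LY, hY, hr⟩ := h _ h2
    refine ⟨L1 ++ LY ++ L3, (h1.append hY).append h3, fun M1 M2 C hp => ?_⟩
    have := hr (M1 ++ L1) (L3 ++ M2) C (by simpa using hp)
    simpa using this
  | brk c p q ih =>
    intro L hL
    obtain ⟨L1, L2, rfl, h1, h2⟩ := Par.split hL
    cases h2 with
    | node Δ L' E F _ L a b c e f h2 =>
      obtain ⟨LY, hY, hr⟩ := ih _ a
      have := hr [] [] E (by simpa using b)
      exact ⟨L1 ++ F :: L, h1.append (.node _ LY _ _ _ _ hY (by simpa using this) c e f h2),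
        fun M1 M2 C hp => hp⟩

theorem cut_fl {L1 L2 X A C} (h : PProvS X A) (h' : PProvS (fl (L1 ++ [A] ++ L2)) C) :
    PProvS (fl L1 ++ X ++ fl L2) C :=
  PProvS.cut X (.hole (fl L1) (fl L2)) A C h (by simpa [PCtx.plug] using h')

theorem cut1 {X A C} (h : PProvS X A) (h' : PProvS [.leaf A] C) : PProvS X C := by
  have := cut_fl (L1 := []) (L2 := []) h (by simpa using h')
  simpa using this

theorem cut_node {X A C} (h : PProvS X A) (h' : PProvS [.node [.leaf A]] C) :
    PProvS [.node X] C := by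
  have := PProvS.cut X (.brk (.hole [] []) [] []) A C h (by simpa [PCtx.plug] using h')
  simpa [PCtx.plug] using this

theorem par_exists {B m Γ C} (h : HP Γ C) : (∀ A, ty A ∈ flatH Γ → SS B m A) → SS B m C →
    ∃ L, Par B m Γ L ∧ PProvS (fl L) C := by
  induction h with
  | id p =>
    intro h hC
    exact ⟨[.prim p], .leaf _ _ _ hC .nil, .id p⟩
  | ldivL G D A A' C hp1 hp2 ih1 ih2 =>
    intro ht hC
    simp only [flat_plug, flatH_append, flatH, flatT, List.append_nil, List.append_assoc,
      List.cons_append, List.nil_append] at ht ih2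
    have hA := ht (.ldiv A A') (by simp)
    have hA1 : SS B m A := ⟨hA.1.1, by have := hA.2; simp only [lenP] at this; omega⟩
    have hA2 : SS B m A' := ⟨hA.1.2, by have := hA.2; simp only [lenP] at this; omega⟩
    obtain ⟨LG, pG, qG⟩ := ih1 (fun X h => ht X (by simp [h])) hA1
    obtain ⟨L, pL, qL⟩ := ih2 (fun X h => by
      simp at h
      rcases h with h | h | h
      · exact ht X (by simp [h])
      · subst h; exact hA2
      · exact ht X (by simp [h])) hC
    have rep : Rep B m [.leaf A'] (G ++ [.leaf (.ldiv A A')]) := by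
      intro LX hX
      cases hX with
      | leaf _ _ L _ hX =>
        cases hX
        refine ⟨LG ++ [.ldiv A A'], pG.append (.leaf _ _ _ hA .nil), fun L1 L2 C h => ?_⟩
        have := PProvS.ldivL (fl LG) (.hole (fl L1) (fl L2)) A A' C qG
          (by simpa [PCtx.plug] using h)
        simpa [PCtx.plug] using this
    obtain ⟨LY, pY, qY⟩ := rep.plug D _ pL
    exact ⟨LY, pY, by simpa using qY [] [] C (by simpa using qL)⟩
  | rdivL G D A A' C hp1 hp2 ih1 ih2 =>
    intro ht hC
    simp only [flat_plug, flatH_append, flatH, flatT, List.append_nil, List.append_assoc,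
      List.cons_append, List.nil_append] at ht ih2
    have hA := ht (.rdiv A' A) (by simp)
    have hA1 : SS B m A := ⟨hA.1.2, by have := hA.2; simp only [lenP] at this; omega⟩
    have hA2 : SS B m A' := ⟨hA.1.1, by have := hA.2; simp only [lenP] at this; omega⟩
    obtain ⟨LG, pG, qG⟩ := ih1 (fun X h => ht X (by simp [h])) hA1
    obtain ⟨L, pL, qL⟩ := ih2 (fun X h => by
      simp at h
      rcases h with h | h | h
      · exact ht X (by simp [h])
      · subst h; exact hA2
      · exact ht X (by simp [h])) hC
    have rep : Rep B m [.leaf A'] (.leaf (.rdiv A' A) :: G) := by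
      intro LX hX
      cases hX with
      | leaf _ _ L _ hX =>
        cases hX
        refine ⟨.rdiv A' A :: LG, .leaf _ _ _ hA pG, fun L1 L2 C h => ?_⟩
        have := PProvS.rdivL (fl LG) (.hole (fl L1) (fl L2)) A A' C qG
          (by simpa [PCtx.plug] using h)
        simpa [PCtx.plug] using this
    obtain ⟨LY, pY, qY⟩ := rep.plug D _ pL
    exact ⟨LY, pY, by simpa using qY [] [] C (by simpa using qL)⟩
  | ldivR G A A' hp ih =>
    intro ht hC
    have hA1 : SS B m A := ⟨hC.1.1, by have := hC.2; simp only [lenP] at this; omega⟩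
    have hA2 : SS B m A' := ⟨hC.1.2, by have := hC.2; simp only [lenP] at this; omega⟩
    obtain ⟨L, pL, qL⟩ := ih (fun X h => by
      simp [flatH, flatT] at h
      rcases h with h | h
      · subst h; exact hA1
      · exact ht X h) hA2
    cases pL with
    | leaf _ _ L _ pL => exact ⟨L, pL, .ldivR _ _ _ qL⟩
  | rdivR G A A' hp ih =>
    intro ht hC
    have hA1 : SS B m A := ⟨hC.1.2, by have := hC.2; simp only [lenP] at this; omega⟩
    have hA2 : SS B m A' := ⟨hC.1.1, by have := hC.2; simp only [lenP] at this; omega⟩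
    obtain ⟨L, pL, qL⟩ := ih (fun X h => by
      simp [flatH, flatT, flatH_append] at h
      rcases h with h | h
      · exact ht X h
      · subst h; exact hA1) hA2
    obtain ⟨L1, L2, rfl, h1, h2⟩ := pL.split
    cases h2 with
    | leaf _ _ L _ h2 =>
      cases h2
      exact ⟨L1, h1, .rdivR _ _ _ (by simpa using qL)⟩
  | mulL D A A' C hp ih =>
    intro ht hC
    simp only [flat_plug, flatH, flatT, List.append_nil,
      List.cons_append, List.nil_append] at ht ih
    have hA := ht (.mul A A') (by simp)
    have hA1 : SS B m A := ⟨hA.1.1, by have := hA.2; simp only [lenP] at this; omega⟩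
    have hA2 : SS B m A' := ⟨hA.1.2, by have := hA.2; simp only [lenP] at this; omega⟩
    obtain ⟨L, pL, qL⟩ := ih (fun X h => by
      simp at h
      rcases h with h | h | h | h
      · exact ht X (by simp [h])
      · subst h; exact hA1
      · subst h; exact hA2
      · exact ht X (by simp [h])) hC
    have rep : Rep B m [.leaf A, .leaf A'] [.leaf (.mul A A')] := by
      intro LX hX
      cases hX with
      | leaf _ _ L _ hX =>
        cases hX with
        | leaf _ _ L _ hX =>
          cases hX
          refine ⟨[.mul A A'], .leaf _ _ _ hA .nil, fun L1 L2 C h => ?_⟩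
          have := PProvS.mulL (.hole (fl L1) (fl L2)) A A' C
            (by simpa [PCtx.plug] using h)
          simpa [PCtx.plug] using this
    obtain ⟨LY, pY, qY⟩ := rep.plug D _ pL
    exact ⟨LY, pY, by simpa using qY [] [] C (by simpa using qL)⟩
  | mulR G D A A' hp1 hp2 ih1 ih2 =>
    intro ht hC
    have hA1 : SS B m A := ⟨hC.1.1, by have := hC.2; simp only [lenP] at this; omega⟩
    have hA2 : SS B m A' := ⟨hC.1.2, by have := hC.2; simp only [lenP] at this; omega⟩
    rw [flatH_append] at ht
    obtain ⟨L1, p1, q1⟩ := ih1 (fun X h => ht X (by simp [h])) hA1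
    obtain ⟨L2, p2, q2⟩ := ih2 (fun X h => ht X (by simp [h])) hA2
    exact ⟨L1 ++ L2, p1.append p2, by simpa using PProvS.mulR _ _ _ _ q1 q2⟩
  | diaL D A C hp ih =>
    intro ht hC
    simp only [flat_plug, flatH, flatT, List.append_nil,
      List.cons_append, List.nil_append] at ht ih
    have hA := ht (.dia A) (by simp)
    have hA1 : SS B m A := ⟨hA.1, by have := hA.2; simp only [lenP] at this; omega⟩
    obtain ⟨L, pL, qL⟩ := ih (fun X h => by
      simp at h
      rcases h with h | h | h
      · exact ht X (by simp [h])
      · subst h; exact hA1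
      · exact ht X (by simp [h])) hC
    have rep : Rep B m [.node [.leaf A]] [.leaf (.dia A)] := by
      intro LX hX
      cases hX with
      | node _ L' E F _ L a b c e f hX =>
        cases hX
        cases a with
        | leaf _ _ L _ a =>
          cases a
          refine ⟨[.dia A], .leaf _ _ _ hA .nil, fun L1 L2 C h => ?_⟩
          have k : PProvS [.leaf (.dia A)] F := by
            have := PProvS.diaL (.hole [] []) A F (by simpa [PCtx.plug] using cut_node b c)
            simpa [PCtx.plug] using this
          simpa using cut_fl k h
    obtain ⟨LY, pY, qY⟩ := rep.plug D _ pL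
    exact ⟨LY, pY, by simpa using qY [] [] C (by simpa using qL)⟩
  | diaR G A hp ih =>
    intro ht hC
    have hA1 : SS B m A := ⟨hC.1, by have := hC.2; simp only [lenP] at this; omega⟩
    obtain ⟨L, pL, qL⟩ := ih (fun X h => ht X (by simp [flatH, flatT, h])) hA1
    exact ⟨[.dia A], .node _ L A _ _ _ pL qL (.diaR _ _ (prov_id A)) hA1 hC .nil, prov_id _⟩
  | boxL D A C hp ih =>
    intro ht hC
    simp only [flat_plug, flatH, flatT, List.append_nil,
      List.cons_append, List.nil_append] at ht ih
    have hA := ht (.box A) (by simp)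
    have hA1 : SS B m A := ⟨hA.1, by have := hA.2; simp only [lenP] at this; omega⟩
    obtain ⟨L, pL, qL⟩ := ih (fun X h => by
      simp at h
      rcases h with h | h | h
      · exact ht X (by simp [h])
      · subst h; exact hA1
      · exact ht X (by simp [h])) hC
    have rep : Rep B m [.leaf A] [.node [.leaf (.box A)]] := by
      intro LX hX
      cases hX with
      | leaf _ _ L _ hX =>
        cases hX
        refine ⟨[A], .node _ [.box A] (.box A) _ _ _ (.leaf _ _ _ hA .nil) (prov_id _) ?_ hA hA1 .nil,
          fun L1 L2 C h => h⟩
        have := PProvS.boxL (.hole [] []) A A (by simpa [PCtx.plug] using prov_id A)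
        simpa [PCtx.plug] using this
    obtain ⟨LY, pY, qY⟩ := rep.plug D _ pL
    exact ⟨LY, pY, by simpa using qY [] [] C (by simpa using qL)⟩
  | boxR G A hp ih =>
    intro ht hC
    have hA1 : SS B m A := ⟨hC.1, by have := hC.2; simp only [lenP] at this; omega⟩
    obtain ⟨L, pL, qL⟩ := ih (fun X h => ht X (by simpa [flatH, flatT] using h)) hA1
    cases pL with
    | node _ L' E F _ L a b c e f pL =>
      cases pL
      exact ⟨L', a, .boxR _ _ (cut1 (cut_node b c) qL)⟩

open Tok

/-! ### Finiteness -/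

theorem lenP_pos (A : PTy) : 0 < lenP A := by
  induction A <;> simp only [lenP] <;> omega

theorem SS_finite (B : Finset ℕ) (m : ℕ) : {A | SS B m A}.Finite := by
  induction m with
  | zero =>
    convert Set.finite_empty
    ext A
    have := lenP_pos A
    simp [SS]
    omega
  | succ m ih =>
    refine ((((((B.finite_toSet.image PTy.prim).union (ih.image2 PTy.ldiv ih)).union
      (ih.image2 PTy.rdiv ih)).union (ih.image2 PTy.mul ih)).union (ih.image PTy.dia)).union
      (ih.image PTy.box)).subset ?_
    rintro A ⟨h1, h2⟩
    cases A with
    | prim p => left; left; left; left; left; exact ⟨p, h1, rfl⟩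
    | ldiv X Y =>
      have := lenP_pos X
      have := lenP_pos Y
      simp only [lenP] at h2
      left; left; left; left; right
      exact ⟨X, ⟨h1.1, by omega⟩, Y, ⟨h1.2, by omega⟩, rfl⟩
    | rdiv X Y =>
      have := lenP_pos X
      have := lenP_pos Y
      simp only [lenP] at h2
      left; left; left; right
      exact ⟨X, ⟨h1.1, by omega⟩, Y, ⟨h1.2, by omega⟩, rfl⟩
    | mul X Y =>
      have := lenP_pos X
      have := lenP_pos Y
      simp only [lenP] at h2
      left; left; right
      exact ⟨X, ⟨h1.1, by omega⟩, Y, ⟨h1.2, by omega⟩, rfl⟩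
    | dia X =>
      simp only [lenP] at h2
      left; right
      exact ⟨X, ⟨h1, by omega⟩, rfl⟩
    | box X =>
      simp only [lenP] at h2
      right
      exact ⟨X, ⟨h1, by omega⟩, rfl⟩

/-- Primitive types of a type. -/
def prims : PTy → Finset ℕ
  | .prim p => {p}
  | .ldiv A C => prims A ∪ prims C
  | .rdiv C A => prims C ∪ prims A
  | .mul A C => prims A ∪ prims C
  | .dia A => prims A
  | .box A => prims A

theorem over_prims {B : Finset ℕ} (A : PTy) (h : prims A ⊆ B) : A.over B := by
  induction A with
  | prim p => exact h (by simp [prims])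
  | ldiv X Y h1 h2 | rdiv X Y h1 h2 | mul X Y h1 h2 =>
    rw [prims, Finset.union_subset_iff] at h
    exact ⟨h1 h.1, h2 h.2⟩
  | dia X ih | box X ih => exact ih h

theorem bound_exists {Sig : Type} (I : Finset (Sig × PTy)) (Dt : PTy) :
    ∃ B m, SS B m Dt ∧ ∀ x ∈ I, SS B m x.2 := by
  refine ⟨I.sup (fun x => prims x.2) ∪ prims Dt, I.sup (fun x => lenP x.2) + lenP Dt,
    ⟨over_prims _ Finset.subset_union_right, by omega⟩, fun x hx => ⟨over_prims _ ?_, ?_⟩⟩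
  · exact subset_trans (Finset.le_sup (f := fun x : Sig × PTy => prims x.2) hx) Finset.subset_union_left
  · have := Finset.le_sup (f := fun x : Sig × PTy => lenP x.2) hx
    exact this.trans (Nat.le_add_right _ _)

/-! ### Yields and flat hedges -/

/-- The type of a token. -/
def tty : Tok → Option PTy
  | ty A => some A
  | _ => none

mutual
theorem yieldT_eq : (t : PTree) → yieldTree t = (flatT t).filterMap tty
  | .leaf A => by simp [yieldTree, flatT, tty]
  | .node ts => by
    rw [yieldTree, flatT, yieldH_eq ts, List.filterMap_cons_none rfl, List.filterMap_append]
    simp [tty]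
theorem yieldH_eq : (ts : List PTree) → yieldHedge ts = (flatH ts).filterMap tty
  | [] => by simp [yieldHedge, flatH]
  | t :: ts => by simp [yieldHedge, flatH, yieldT_eq t, yieldH_eq ts]
end

theorem yield_inv {Γ : PHedge} {Y A Z} (h : yieldHedge Γ = Y ++ A :: Z) :
    ∃ D : PCtx, Γ = D.plug [.leaf A] ∧ ∀ X, yieldHedge (D.plug X) = Y ++ (yieldHedge X ++ Z) := by
  rw [yieldH_eq, List.filterMap_eq_append_iff] at h
  obtain ⟨l1, l2, e, h1, h2⟩ := h
  rw [List.filterMap_eq_cons_iff] at h2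
  obtain ⟨l3, t, l4, rfl, h3, h4, h5⟩ := h2
  have ht : t = ty A := by
    cases t <;> simp [tty] at h4
    rw [h4]
  subst ht
  obtain ⟨D, rfl, e1, e2⟩ := invH A Γ (l1 ++ l3) l4 (by simp [e])
  refine ⟨D, rfl, fun X => ?_⟩
  have h3' : l3.filterMap tty = [] := List.filterMap_eq_nil_iff.2 h3
  rw [yieldH_eq, yieldH_eq, flat_plug, e1, e2]
  simp [h1, h3', h5]

theorem flat_fl (L : List PTy) : flatH (fl L) = L.map ty := by
  induction L with
  | nil => simp [flatH]
  | cons a L ih => simp [flatH, flatT] at *; exact ih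

theorem yield_fl (L : List PTy) : yieldHedge (fl L) = L := by
  induction L with
  | nil => simp [yieldHedge]
  | cons a L ih => simp [yieldHedge, yieldTree] at *; exact ih

theorem flat_fl_inv : ∀ {Γ : PHedge} {L : List PTy}, flatH Γ = L.map ty → Γ = fl L
  | [], [], _ => rfl
  | [], a :: L, h => by simp [flatH] at h
  | .leaf A :: Γ, [], h => by simp [flatH, flatT] at h
  | .leaf A :: Γ, a :: L, h => by
    simp [flatH, flatT] at h
    simp [h.1, flat_fl_inv h.2]
  | .node Δ :: Γ, [], h => by simp [flatH, flatT] at h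
  | .node Δ :: Γ, a :: L, h => by simp [flatH, flatT] at h

theorem TP.fl {L C} (h : TP (L.map ty) C) : PProvS (fl L) C := by
  obtain ⟨G, h1, h2⟩ := h
  rwa [← flat_fl_inv h1]

theorem fat_fl (L : List PTy) : Fat (L.map ty) := by
  intro U V h
  have : lb ∈ L.map ty := by rw [h]; simp
  simp at this

theorem bal_fl (L : List PTy) : Bal (L.map ty) := by
  rw [← flat_fl]
  exact flatH_bal _

theorem forall_split {α β : Type} {R : α → β → Prop} : ∀ {p q : List α} {Y : List β},
    List.Forall₂ R (p ++ q) Y → ∃ Y1 Y2, List.Forall₂ R p Y1 ∧ List.Forall₂ R q Y2 ∧ Y = Y1 ++ Y2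
  | [], q, Y, h => ⟨[], Y, .nil, h, rfl⟩
  | a :: p, q, _, h => by
    rw [List.cons_append] at h
    cases h with
    | cons h1 h2 =>
      obtain ⟨Y1, Y2, h3, h4, rfl⟩ := forall_split h2
      exact ⟨_, Y2, .cons h1 h3, h4, rfl⟩

/-! ### The grammar -/

/-- Matching of symbols with types. -/
def Rel {Sig : Type} (I : Finset (Sig × PTy)) : Symbol Sig PTy → PTy → Prop
  | .nonterminal A, A' => A = A'
  | .terminal a, A' => (a, A') ∈ I

/-- Allowed symbols. -/
def syms (Sig : Type) (B : Finset ℕ) (m : ℕ) : Set (Symbol Sig PTy) :=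
  Set.image Symbol.nonterminal {A | SS B m A} ∪ Set.range Symbol.terminal

/-- Allowed right-hand sides. -/
def rhs (Sig : Type) (B : Finset ℕ) (m : ℕ) : Set (List (Symbol Sig PTy)) :=
  {[]} ∪ Set.image (fun x => [x]) (syms Sig B m) ∪ Set.image2 (fun x y => [x, y]) (syms Sig B m) (syms Sig B m)

/-- The rules. -/
def rset {Sig : Type} (I : Finset (Sig × PTy)) (B : Finset ℕ) (m : ℕ) :
    Set (ContextFreeRule Sig PTy) :=
  {r | SS B m r.input ∧ r.output ∈ rhs Sig B m ∧
    ∃ X, PProvS X r.input ∧ List.Forall₂ (Rel I) r.output (yieldHedge X)}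

theorem rset_finite {Sig : Type} [Fintype Sig] (I : Finset (Sig × PTy)) (B : Finset ℕ) (m : ℕ) :
    (rset I B m).Finite := by
  have h1 : (syms Sig B m).Finite := ((SS_finite B m).image _).union (Set.finite_range _)
  have h2 : (rhs Sig B m).Finite :=
    ((Set.finite_singleton _).union (h1.image _)).union (h1.image2 _ h1)
  refine ((SS_finite B m).image2 (fun a b => (⟨a, b⟩ : ContextFreeRule Sig PTy)) h2).subset ?_
  rintro ⟨a, b⟩ ⟨ha, hb, _⟩
  exact ⟨a, ha, b, hb, rfl⟩

/-- The grammar. -/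
noncomputable def gr {Sig : Type} [Fintype Sig] (I : Finset (Sig × PTy)) (Dt : PTy)
    (B : Finset ℕ) (m : ℕ) : ContextFreeGrammar Sig where
  NT := PTy
  initial := Dt
  rules := (rset_finite I B m).toFinset

section
variable {Sig : Type} [Fintype Sig] {I : Finset (Sig × PTy)} {Dt : PTy} {B : Finset ℕ} {m : ℕ}

theorem mem_gr {r : ContextFreeRule Sig PTy} : r ∈ (gr I Dt B m).rules ↔ r ∈ rset I B m :=
  Set.Finite.mem_toFinset _

variable (I Dt B m) in
/-- Derivability in the grammar. -/
def Der (u v : List (Symbol Sig PTy)) : Prop := (gr I Dt B m).Derives u v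

theorem Der.refl (u : List (Symbol Sig PTy)) : Der I Dt B m u u :=
  ContextFreeGrammar.Derives.refl (g := gr I Dt B m) u

theorem Der.trans {u v w : List (Symbol Sig PTy)} (h : Der I Dt B m u v) (h' : Der I Dt B m v w) :
    Der I Dt B m u w :=
  ContextFreeGrammar.Derives.trans (g := gr I Dt B m) h h'

theorem Der.append_left {u v : List (Symbol Sig PTy)} (h : Der I Dt B m u v)
    (p : List (Symbol Sig PTy)) : Der I Dt B m (p ++ u) (p ++ v) :=
  ContextFreeGrammar.Derives.append_left (g := gr I Dt B m) h p

theorem Der.append_right {u v : List (Symbol Sig PTy)} (h : Der I Dt B m u v)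
    (p : List (Symbol Sig PTy)) : Der I Dt B m (u ++ p) (v ++ p) :=
  ContextFreeGrammar.Derives.append_right (g := gr I Dt B m) h p

theorem rule_derives {A : PTy} {o : List (Symbol Sig PTy)} (h : (⟨A, o⟩ : ContextFreeRule Sig PTy) ∈ rset I B m) :
    Der I Dt B m [.nonterminal A] o := by
  refine ContextFreeGrammar.Produces.single ⟨⟨A, o⟩, ?_, ?_⟩
  · exact mem_gr.2 h
  · exact ContextFreeRule.Rewrites.input_output

theorem forall_nt (L : List PTy) : List.Forall₂ (Rel I) (L.map Symbol.nonterminal) L := by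
  induction L with
  | nil => exact .nil
  | cons a L ih => exact .cons rfl ih

theorem derives_short {L : List PTy} {C : PTy} (hl : L.length ≤ 2) (hL : ∀ A ∈ L, SS B m A)
    (hC : SS B m C) (h : PProvS (fl L) C) :
    Der I Dt B m [.nonterminal C] (L.map Symbol.nonterminal) := by
  apply rule_derives
  refine ⟨hC, ?_, fl L, h, ?_⟩
  · match L, hl, hL with
    | [], _, _ => left; left; rfl
    | [a], _, hL => left; right; exact ⟨_, .inl ⟨a, hL a (by simp), rfl⟩, rfl⟩
    | [a, b], _, hL =>
      right
      exact ⟨_, .inl ⟨a, hL a (by simp), rfl⟩, _, .inl ⟨b, hL b (by simp), rfl⟩, rfl⟩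
  · rw [yield_fl]
    exact forall_nt L

theorem hyp_step {d : ℕ → ℕ → ℕ} (hd : Hyp d) {n m : ℕ} (hn : 2 ≤ n)
    (h1 : ∀ k, k < n → d k (k + 1) ≤ m) (h2 : d 0 n ≤ m) :
    (∃ k, k + 2 ≤ n ∧ d k (k + 2) ≤ m) ∨ d 0 (n - 1) ≤ m := by
  obtain ⟨k, hk, hmax⟩ := Finset.exists_max_image (Finset.Icc 1 n) (fun k => d 0 k)
    ⟨1, by simp; omega⟩
  simp only [Finset.mem_Icc] at hk hmax
  by_cases hkn : k = n
  · right
    subst hkn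
    exact (hmax (k - 1) (by omega)).trans h2
  · left
    obtain ⟨j, rfl⟩ : ∃ j, k = j + 1 := ⟨k - 1, by omega⟩
    refine ⟨j, by omega, ?_⟩
    have f := hd.four 0 j (j + 1) (j + 2)
    have a := h1 j (by omega)
    have b := h1 (j + 1) (by omega)
    have c := hmax (j + 2) (by omega)
    have e : d 0 j ≤ d 0 (j + 1) := by
      rcases Nat.eq_zero_or_pos j with rfl | hj
      · rw [hd.refl]; omega
      · exact hmax j (by omega)
    simp only [add_assoc, Nat.reduceAdd] at *
    omega

theorem derives_flat : ∀ (n : ℕ) (L : List PTy) (C : PTy), L.length = n → (∀ A ∈ L, SS B m A) →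
    SS B m C → PProvS (fl L) C →
    Der I Dt B m [.nonterminal C] (L.map Symbol.nonterminal) := by
  intro n
  induction n using Nat.strong_induction_on with
  | _ n ih =>
  intro L C hn hL hC h
  by_cases hl : L.length ≤ 2
  · exact derives_short hl hL hC h
  obtain ⟨d, g⟩ := good_exists (B := B) (cut_elim h) (by rw [flat_fl]; exact fat_fl L)
    (by intro A hA; rw [flat_fl] at hA; simp at hA; exact (hL A hA).1) hC.1
  rw [flat_fl] at g
  have hw := g.whole
  rw [List.length_map] at hw
  have htok : ∀ k, k < L.length → d k (k + 1) ≤ m := by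
    intro k hk
    have := g.tok ((L.take k).map ty) (ty L[k]) ((L.drop (k + 1)).map ty) (by
      rw [← List.map_cons, ← List.map_append, ← List.drop_eq_getElem_cons, List.take_append_drop])
    have hle := (hL L[k] (by simp)).2
    have e : ((L.take k).map ty).length = k := by simp; omega
    rw [e] at this
    exact this.trans hle
  rcases hyp_step g.hyp (n := L.length) (m := m) (by omega) htok (hw.trans hC.2) with ⟨k, hk, hd⟩ | hd
  · obtain ⟨L1, A, A', L2, rfl, hl1⟩ : ∃ L1 A A' L2, L = L1 ++ ([A, A'] ++ L2) ∧ L1.length = k := by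
      refine ⟨L.take k, L[k], L[k + 1], L.drop (k + 2), ?_, by simp; omega⟩
      simp only [List.cons_append, List.nil_append]
      rw [← List.drop_eq_getElem_cons, ← List.drop_eq_getElem_cons, List.take_append_drop]
    obtain ⟨E, e1, e2, e3, e4⟩ := g.interp (L1.map ty) ([A, A'].map ty) (L2.map ty) (by simp)
      (by simp) (bal_fl _)
    have hE : SS B m E := ⟨e1, by
      refine e2.trans ?_
      simpa [hl1] using hd⟩
    have q1 := ih 2 (by omega) [A, A'] E rfl (fun X hX => hL X (by simp at hX ⊢; tauto)) hE e3.fl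
    have q2 := ih (L1 ++ E :: L2).length (by simp at hn ⊢; omega) (L1 ++ E :: L2) C rfl
      (fun X hX => by
        simp at hX
        rcases hX with h | h | h
        · exact hL X (by simp [h])
        · subst h; exact hE
        · exact hL X (by simp [h])) hC (TP.fl (by simpa using e4))
    refine q2.trans ?_
    have := (q1.append_right (L2.map Symbol.nonterminal)).append_left (L1.map Symbol.nonterminal)
    simpa using this
  · rcases List.eq_nil_or_concat L with rfl | ⟨L1, A, rfl⟩
    · simp at hl
    · rw [List.concat_eq_append] at *
      simp at hl
      obtain ⟨E, e1, e2, e3, e4⟩ := g.interp [] (L1.map ty) ([A].map ty) (by simp)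
        (by intro h; simp at h; simp [h] at hl) (bal_fl _)
      have hE : SS B m E := ⟨e1, by
        refine e2.trans ?_
        simpa using hd⟩
      have q1 := ih L1.length (by simp at hn; omega) L1 E rfl (fun X hX => hL X (by simp [hX])) hE e3.fl
      have q2 := ih 2 (by simp at hn; omega) [E, A] C rfl
        (fun X hX => by
          simp at hX
          rcases hX with h | h
          · subst h; exact hE
          · exact hL X (by simp [h])) hC (TP.fl (by simpa using e4))
      refine q2.trans ?_
      have := q1.append_right [Symbol.nonterminal A]
      simpa using this

theorem derives_par {Γ L} (h : Par B m Γ L) : ∀ l : List (Sig × PTy), (∀ x ∈ l, x ∈ I) →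
    yieldHedge Γ = l.map Prod.snd →
    Der I Dt B m (L.map Symbol.nonterminal) (l.map fun x => Symbol.terminal x.1) := by
  induction h with
  | nil =>
    intro l _ h
    simp [yieldHedge] at h
    subst h
    exact .refl _
  | leaf A Γ L hA _ ih =>
    intro l hl h
    cases l with
    | nil => simp [yieldHedge, yieldTree] at h
    | cons x l =>
      simp [yieldHedge, yieldTree] at h
      obtain ⟨rfl, h⟩ := h
      have q := ih l (fun y hy => hl y (by simp [hy])) h
      have r : Der I Dt B m [.nonterminal x.2] [.terminal x.1] := by
        apply rule_derives
        refine ⟨hA, .inl (.inr ⟨_, .inr ⟨x.1, rfl⟩, rfl⟩), [.leaf x.2], prov_id _, ?_⟩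
        simp only [yieldHedge, yieldTree, List.append_nil]
        exact .cons (hl x (by simp)) .nil
      have a := r.append_right (L.map Symbol.nonterminal)
      have b := q.append_left [Symbol.terminal x.1]
      exact a.trans b
  | node Δ L' E F Γ L a b c e f _ ih1 ih2 =>
    intro l hl h
    simp only [yieldHedge, yieldTree] at h
    obtain ⟨l1, l2, rfl, h1, h2⟩ := List.map_eq_append_iff.1 h.symm
    have q1 := ih1 l1 (fun y hy => hl y (by simp [hy])) h1.symm
    have q2 := ih2 l2 (fun y hy => hl y (by simp [hy])) h2.symm
    have q3 := derives_flat (I := I) (Dt := Dt) _ L' E rfl a.mem e b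
    have q4 : Der I Dt B m [.nonterminal F] [.nonterminal E] := by
      apply rule_derives
      refine ⟨f, .inl (.inr ⟨_, .inl ⟨E, e, rfl⟩, rfl⟩), _, c, ?_⟩
      simp only [yieldHedge, yieldTree, List.append_nil]
      exact .cons rfl .nil
    have q5 := ((q4.trans q3).trans q1).append_right (L.map Symbol.nonterminal)
    have q6 := q2.append_left (l1.map fun x => Symbol.terminal x.1)
    have := q5.trans q6
    simpa using this

theorem sound_gr {s : List (Symbol Sig PTy)} (h : Der I Dt B m [.nonterminal Dt] s) :
    ∃ Γ, PProvS Γ Dt ∧ List.Forall₂ (Rel I) s (yieldHedge Γ) := by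
  induction h with
  | refl => exact ⟨[.leaf Dt], prov_id _, by
      simp only [yieldHedge, yieldTree, List.append_nil]; exact .cons rfl .nil⟩
  | tail _ hs ih =>
    obtain ⟨Γ, hΓ, hf⟩ := ih
    obtain ⟨r, hr, hrw⟩ := hs
    obtain ⟨p, q, rfl, rfl⟩ := hrw.exists_parts
    obtain ⟨_, _, X, hX, hXf⟩ := mem_gr.1 hr
    rw [List.append_assoc] at hf
    obtain ⟨Y, Z', h1, h2, e⟩ : ∃ Y Z', List.Forall₂ (Rel I) p Y ∧
        List.Forall₂ (Rel I) ([Symbol.nonterminal r.input] ++ q) Z' ∧ yieldHedge Γ = Y ++ Z' := by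
      exact forall_split hf
    cases h2 with
    | cons hA h3 =>
      rename_i A Z
      have hA' : r.input = A := hA
      subst hA'
      obtain ⟨D, rfl, hD⟩ := yield_inv e
      refine ⟨D.plug X, .cut _ _ _ _ hX hΓ, ?_⟩
      rw [hD, List.append_assoc]
      exact List.rel_append h1 (List.rel_append hXf h3)

end

theorem rel_term {Sig : Type} {I : Finset (Sig × PTy)} : ∀ {w : List Sig} {Y : List PTy},
    List.Forall₂ (Rel I) (w.map Symbol.terminal) Y →
    ∃ l : List (Sig × PTy), (∀ x ∈ l, x ∈ I) ∧ w = l.map Prod.fst ∧ Y = l.map Prod.snd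
  | [], _, h => by
    cases h
    exact ⟨[], by simp⟩
  | a :: w, _, h => by
    cases h with
    | cons h1 h2 =>
      rename_i A Y
      obtain ⟨l, h3, rfl, rfl⟩ := rel_term h2
      exact ⟨(a, A) :: l, by simpa using ⟨h1, fun a b h => h3 (a, b) h⟩, rfl, rfl⟩

theorem main_thm {Sig : Type} [Fintype Sig] (I : Finset (Sig × PTy)) (Dt : PTy) :
    (grammarLangStar I Dt).IsContextFree := by
  obtain ⟨B, m, hD, hI⟩ := bound_exists I Dt
  refine ⟨gr I Dt B m, ?_⟩
  ext w
  rw [ContextFreeGrammar.mem_language_iff]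
  constructor
  · intro h
    obtain ⟨Γ, h1, h2⟩ := sound_gr h
    obtain ⟨l, h3, h4, h5⟩ := rel_term h2
    exact ⟨Γ, l, h1, h3, h4, h5⟩
  · rintro ⟨G, l, h1, h2, rfl, h3⟩
    obtain ⟨L, p, q⟩ := par_exists (B := B) (m := m) (cut_elim h1) (fun A hA => by
      have : A ∈ yieldHedge G := by
        rw [yieldH_eq, List.mem_filterMap]
        exact ⟨_, hA, rfl⟩
      rw [h3] at this
      obtain ⟨x, hx, rfl⟩ := List.mem_map.1 this
      exact hI x (h2 x hx)) hD
    have a := derives_flat (I := I) (Dt := Dt) _ L Dt rfl p.mem hD q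
    have b := derives_par (Dt := Dt) p l h2 h3
    have := a.trans b
    rw [List.map_map]
    exact this

end LB

/-- Every language recognized by an L*◇ grammar is context-free (possibly containing
the empty string). -/
theorem LstarDiamond_recognizable_is_context_free
    {Sig : Type} [Fintype Sig] [DecidableEq Sig]
    (I : Finset (Sig × PTy)) (Dt : PTy) :
    (grammarLangStar I Dt).IsContextFree := by
  exact LB.main_thm I Dt
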